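/- arXiv:1902.03641 — 2 statements merged into one kernel-verified Lean document; each statement's English description precedes it below -/
import Mathlib

section
/- Let K be any field, let F be a totally looped finite graph, and let E be a graph which arises as a hair extension of F. Let ε be a nonzero idempotent in L_K(E). Then the corner ring ε L_K(E) ε is isomorphic as a K-algebra to L_K(G), where G is a hair extension of the restriction graph F_T of F to some hereditary subset T of F^0. Moreover, if ε is a full idempotent in L_K(E), then ε L_K(E) ε is isomorphic to the Leavitt path algebra of a hair extension of F itself. -/
/-!
The argument is elementary and works with right ideals of `L = L_K(F⁺(n))`.

*Decomposition.* Let `A ⊆ L` be the subalgebra spanned by the paths.  Paths are linearly independent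
(`HairCorner.ev_injOn`), as seen by letting `L` act on functions on a graded branching system.  Every
element of `L` can be multiplied into `A` by finitely many elements `a i` of `A` such that
`∑ a i * a' i = 1` (`HairCorner.hasDenom`, `HairCorner.exists_common_denom`).  So the right ideal of an
idempotent `ε` is generated by finitely many combinations of paths with a common end.  Choose such a
system of minimal total degree for a multiplicative numbering of paths: its leading paths are
prefix-free, so its members are right independent, and `ε L` is isomorphic to a finite direct sum of
right ideals `v_j L` with vertices `v_j` (`HairCorner.exists_sys`).

*Hereditary support.* A vertex `v` may be replaced by the ranges of the edges it emits.  This moves all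
`v_j` down the hair into `F`, and, as every regular vertex of `F` has a loop, a replacement in `F` only
adds vertices to the set of the `v_j`.  When this set is maximal it is a hereditary set `T`
(`HairCorner.exists_hereditary_sysOn`).

*Recognition.* Let `m u ≥ 1` be the number of `j` with `v_j = u`.  The `v_j` are then the bases of the
vertices of `F_T⁺(m)`, and there is a homomorphism from `L_K(F_T⁺(m))` to `ε L ε` in which hair edges
act by vertices and the other edges by themselves.  It is injective on paths, hence injective
(`HairCorner.injective_of_pathAlg`), and it is onto because `L` is spanned by products of paths and
ghost paths (`HairCorner.Sys.isCornerIso`).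

*Full idempotents.* A hereditary set `T` of a totally looped graph is saturated, so there is a
representation of `L` which kills precisely the vertices over `T`; it kills `ε`.  If `ε` is full it
kills `1`, so `T` is the set of all vertices (`HairCorner.surjective_of_full`).
-/

/-! ## Finite directed graphs -/

structure FinGraph where
  V : Type
  E : Type
  [fintypeV : Fintype V]
  [fintypeE : Fintype E]
  [decEqV : DecidableEq V]
  [decEqE : DecidableEq E]
  s : E → V
  r : E → V

attribute [instance] FinGraph.fintypeV FinGraph.fintypeE FinGraph.decEqV FinGraph.decEqE

namespace FinGraph

/-- A vertex is regular if it emits at least one edge. -/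
def IsRegular (G : FinGraph) (v : G.V) : Prop := ∃ e : G.E, G.s e = v

/-- A sink emits no edges. -/
def IsSink (G : FinGraph) (v : G.V) : Prop := ∀ e : G.E, G.s e ≠ v

/-- A source receives no edges. -/
def IsSource (G : FinGraph) (v : G.V) : Prop := ∀ e : G.E, G.r e ≠ v

/-- A graph is totally looped if every regular vertex is the base of a loop. -/
def TotallyLooped (G : FinGraph) : Prop :=
  ∀ v : G.V, G.IsRegular v → ∃ e : G.E, G.s e = v ∧ G.r e = v

/-- A set of vertices is hereditary if it is closed under ranges of edges emitted
from its elements (equivalently, under reachability by paths). -/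
def Hereditary (G : FinGraph) (T : Finset G.V) : Prop :=
  ∀ e : G.E, G.s e ∈ T → G.r e ∈ T

/-- A set of vertices `H` is saturated if every regular vertex all of whose emitted
edges end in `H` belongs to `H`. -/
def Saturated (G : FinGraph) (H : Set G.V) : Prop :=
  ∀ v : G.V, G.IsRegular v → (∀ e : G.E, G.s e = v → G.r e ∈ H) → v ∈ H

/-- The trivial graph: one vertex, no edges. -/
def IsTrivial (G : FinGraph) : Prop :=
  Nonempty G.V ∧ Subsingleton G.V ∧ IsEmpty G.E

/-- A graph is source-free if every vertex receives at least one edge. -/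
def IsSourceFree (G : FinGraph) : Prop := ∀ v : G.V, ∃ e : G.E, G.r e = v

/-- The graph with `k` vertices and no edges. -/
def discrete (k : ℕ) : FinGraph where
  V := Fin k
  E := Empty
  s := Empty.elim
  r := Empty.elim

/-- The straight line graph `A_n` with `n` vertices `v_0, …, v_{n-1}` and
edges `v_{i+1} → v_i` for `0 ≤ i ≤ n-2`. -/
def line (n : ℕ) : FinGraph where
  V := Fin n
  E := Fin (n - 1)
  s := fun i => ⟨i.1 + 1, by have := i.isLt; omega⟩
  r := fun i => ⟨i.1, by have := i.isLt; omega⟩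

/-- Disjoint union of two graphs. -/
def disjUnion (G H : FinGraph) : FinGraph where
  V := G.V ⊕ H.V
  E := G.E ⊕ H.E
  s := Sum.map G.s H.s
  r := Sum.map G.r H.r

/-- The restriction graph of `G` to a hereditary set `T` of vertices. -/
def restrict (G : FinGraph) (T : Finset G.V) (hT : G.Hereditary T) : FinGraph where
  V := {v : G.V // v ∈ T}
  E := {e : G.E // G.s e ∈ T}
  s := fun e => ⟨G.s e.1, e.2⟩
  r := fun e => ⟨G.r e.1, hT e.1 e.2⟩

/-- The "strands of hair" extension `F⁺(n)` of `F`:  at each vertex `v` a strand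
`v^{n v - 1} → ⋯ → v^1 → v` of length `n v - 1` is attached. -/
def hairExtension (F : FinGraph) (n : F.V → ℕ) : FinGraph where
  V := F.V ⊕ (Σ v : F.V, Fin (n v - 1))
  E := F.E ⊕ (Σ v : F.V, Fin (n v - 1))
  s := Sum.elim (fun e => Sum.inl (F.s e)) (fun p => Sum.inr p)
  r := Sum.elim (fun e => Sum.inl (F.r e))
    (fun p => if h : (p.2 : ℕ) = 0 then Sum.inl p.1
      else Sum.inr ⟨p.1, ⟨(p.2 : ℕ) - 1, by have := p.2.isLt; omega⟩⟩)

/-- The "Move (R)" graph at a vertex `w` which emits precisely one edge `f`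
which is not a loop: `w` is removed, and each edge `e` into `w` is replaced by
an edge `[ef]` from `s e` to `r f`. -/
def moveR (E : FinGraph) (w : E.V) (f : E.E)
    (hsf : E.s f = w) (huniq : ∀ e : E.E, E.s e = w → e = f) (hnl : E.r f ≠ w) : FinGraph where
  V := {v : E.V // v ≠ w}
  E := {e : E.E // E.r e ≠ w ∧ e ≠ f} ⊕ {e : E.E // E.r e = w}
  s := Sum.elim
    (fun e => ⟨E.s e.1, fun h => e.2.2 (huniq e.1 h)⟩)
    (fun e => ⟨E.s e.1, fun h => hnl ((huniq e.1 h) ▸ e.2)⟩)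
  r := Sum.elim
    (fun e => ⟨E.r e.1, e.2.1⟩)
    (fun _ => ⟨E.r f, hnl⟩)

/-- The collapse of `E` at a vertex `v` which is not the base of a loop:
`v` is removed, and for every `e ∈ r⁻¹(v)` and `f ∈ s⁻¹(v)` an edge `[ef]`
from `s e` to `r f` is added. -/
def collapse (E : FinGraph) (v : E.V)
    (hnl : ∀ e : E.E, E.s e = v → E.r e ≠ v) : FinGraph where
  V := {u : E.V // u ≠ v}
  E := {e : E.E // E.r e ≠ v ∧ E.s e ≠ v} ⊕ ({e : E.E // E.r e = v} × {f : E.E // E.s f = v})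
  s := Sum.elim
    (fun e => ⟨E.s e.1, e.2.2⟩)
    (fun p => ⟨E.s p.1.1, fun h => (hnl p.1.1 h) p.1.2⟩)
  r := Sum.elim
    (fun e => ⟨E.r e.1, e.2.1⟩)
    (fun p => ⟨E.r p.2.1, hnl p.2.1 p.2.2⟩)

/-- The in-split graph of `E` at a vertex `v`, with respect to a partition of
`r⁻¹(v)` into `n` classes (encoded as a surjection `P : r⁻¹(v) → Fin n`). -/
def inSplit (E : FinGraph) (v : E.V) (n : ℕ) (P : {e : E.E // E.r e = v} → Fin n) : FinGraph where
  V := {u : E.V // u ≠ v} ⊕ Fin n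
  E := ({e : E.E // E.s e = v} × Fin n) ⊕ {f : E.E // E.s f ≠ v}
  s := Sum.elim (fun x => Sum.inr x.2) (fun f => Sum.inl ⟨E.s f.1, f.2⟩)
  r := Sum.elim
    (fun x => if h : E.r x.1.1 = v then Sum.inr (P ⟨x.1.1, h⟩) else Sum.inl ⟨E.r x.1.1, h⟩)
    (fun f => if h : E.r f.1 = v then Sum.inr (P ⟨f.1, h⟩) else Sum.inl ⟨E.r f.1, h⟩)

/-- The out-split graph of `E` at a vertex `v`, with respect to a partition of
`s⁻¹(v)` into `n` classes (encoded as a surjection `P : s⁻¹(v) → Fin n`). -/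
def outSplit (E : FinGraph) (v : E.V) (n : ℕ) (P : {e : E.E // E.s e = v} → Fin n) : FinGraph where
  V := {u : E.V // u ≠ v} ⊕ Fin n
  E := ({e : E.E // E.r e = v} × Fin n) ⊕ {f : E.E // E.r f ≠ v}
  r := Sum.elim (fun x => Sum.inr x.2) (fun f => Sum.inl ⟨E.r f.1, f.2⟩)
  s := Sum.elim
    (fun x => if h : E.s x.1.1 = v then Sum.inr (P ⟨x.1.1, h⟩) else Sum.inl ⟨E.s x.1.1, h⟩)
    (fun f => if h : E.s f.1 = v then Sum.inr (P ⟨f.1, h⟩) else Sum.inl ⟨E.s f.1, h⟩)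

/-- The source elimination graph `E \ v` at a source `v`. -/
def sourceElim (E : FinGraph) (v : E.V) (hsrc : E.IsSource v) : FinGraph where
  V := {u : E.V // u ≠ v}
  E := {e : E.E // E.s e ≠ v}
  s := fun e => ⟨E.s e.1, e.2⟩
  r := fun e => ⟨E.r e.1, fun h => hsrc e.1 h⟩

/-- A chain of source eliminations starting at `E`. -/
inductive ElimChain (E : FinGraph) : FinGraph → Type 1
  | refl : ElimChain E E
  | step {H : FinGraph} (c : ElimChain E H) (v : H.V) (hsrc : H.IsSource v) :
      ElimChain E (H.sourceElim v hsrc)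

/-- The canonical (injective) map from the vertices of the final graph of a
source elimination chain back into the vertices of the initial graph. -/
def ElimChain.vmap {E : FinGraph} : {F : FinGraph} → ElimChain E F → F.V → E.V
  | _, .refl, u => u
  | _, .step c _ _, u => c.vmap u.1

/-- A chain of collapses, each performed at a regular vertex which is not the
base of a loop. -/
inductive CollapseChain (E : FinGraph) : FinGraph → Prop
  | refl : CollapseChain E E
  | step {H : FinGraph} (c : CollapseChain E H) (v : H.V) (hreg : H.IsRegular v)
      (hnl : ∀ e : H.E, H.s e = v → H.r e ≠ v) :
      CollapseChain E (H.collapse v hnl)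

end FinGraph

/-! ## Leavitt path algebras -/

/-- Generators of the Leavitt path algebra: vertices, edges, and ghost edges. -/
inductive LPAGen (G : FinGraph) : Type
  | vert : G.V → LPAGen G
  | edge : G.E → LPAGen G
  | ghost : G.E → LPAGen G

/-- The defining relations of the Leavitt path algebra of a finite graph. -/
inductive LeavittRel (K : Type) [Field K] (G : FinGraph) :
    FreeAlgebra K (LPAGen G) → FreeAlgebra K (LPAGen G) → Prop
  | vertMul (v w : G.V) :
      LeavittRel K G (FreeAlgebra.ι K (LPAGen.vert v) * FreeAlgebra.ι K (LPAGen.vert w))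
        (if v = w then FreeAlgebra.ι K (LPAGen.vert v) else 0)
  | edgeLeft (e : G.E) :
      LeavittRel K G (FreeAlgebra.ι K (LPAGen.vert (G.s e)) * FreeAlgebra.ι K (LPAGen.edge e))
        (FreeAlgebra.ι K (LPAGen.edge e))
  | edgeRight (e : G.E) :
      LeavittRel K G (FreeAlgebra.ι K (LPAGen.edge e) * FreeAlgebra.ι K (LPAGen.vert (G.r e)))
        (FreeAlgebra.ι K (LPAGen.edge e))
  | ghostLeft (e : G.E) :
      LeavittRel K G (FreeAlgebra.ι K (LPAGen.vert (G.r e)) * FreeAlgebra.ι K (LPAGen.ghost e))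
        (FreeAlgebra.ι K (LPAGen.ghost e))
  | ghostRight (e : G.E) :
      LeavittRel K G (FreeAlgebra.ι K (LPAGen.ghost e) * FreeAlgebra.ι K (LPAGen.vert (G.s e)))
        (FreeAlgebra.ι K (LPAGen.ghost e))
  | ghostEdge (e f : G.E) :
      LeavittRel K G (FreeAlgebra.ι K (LPAGen.ghost e) * FreeAlgebra.ι K (LPAGen.edge f))
        (if e = f then FreeAlgebra.ι K (LPAGen.vert (G.r e)) else 0)
  | cuntzKrieger (v : G.V) (hv : G.IsRegular v) :
      LeavittRel K G (FreeAlgebra.ι K (LPAGen.vert v))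
        (∑ e ∈ Finset.univ.filter (fun e : G.E => G.s e = v),
          FreeAlgebra.ι K (LPAGen.edge e) * FreeAlgebra.ι K (LPAGen.ghost e))
  | unit :
      LeavittRel K G 1 (∑ v : G.V, FreeAlgebra.ι K (LPAGen.vert v))

/-- The Leavitt path algebra `L_K(G)` of a finite graph `G` with coefficients in
a field `K`. -/
abbrev LeavittPathAlgebra (K : Type) [Field K] (G : FinGraph) : Type :=
  RingQuot (LeavittRel K G)

namespace LeavittPathAlgebra

variable (K : Type) [Field K] (G : FinGraph)

/-- The image of a vertex in the Leavitt path algebra. -/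
def vert (v : G.V) : LeavittPathAlgebra K G :=
  RingQuot.mkAlgHom K (LeavittRel K G) (FreeAlgebra.ι K (LPAGen.vert v))

/-- The image of an edge in the Leavitt path algebra. -/
def edge (e : G.E) : LeavittPathAlgebra K G :=
  RingQuot.mkAlgHom K (LeavittRel K G) (FreeAlgebra.ι K (LPAGen.edge e))

/-- The image of a ghost edge in the Leavitt path algebra. -/
def ghost (e : G.E) : LeavittPathAlgebra K G :=
  RingQuot.mkAlgHom K (LeavittRel K G) (FreeAlgebra.ι K (LPAGen.ghost e))

end LeavittPathAlgebra

/-! ## Ring-theoretic notions -/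

/-- Two unital rings are Morita equivalent if their categories of left modules
are equivalent. -/
def MoritaEquivalent (R S : Type) [Ring R] [Ring S] : Prop :=
  Nonempty (ModuleCat.{0} R ≌ ModuleCat.{0} S)

/-- An idempotent `e` of a ring `R` is full if `R e R = R`, i.e. `1` is a finite
sum of elements of the form `a * e * b`. -/
def IsFullIdempotent {R : Type} [Ring R] (e : R) : Prop :=
  IsIdempotentElem e ∧ ∃ (n : ℕ) (a b : Fin n → R), (∑ i, a i * e * b i) = 1

/-- `S` is isomorphic, as a (nonunital) `K`-algebra, to the corner ring
`ε R ε = {x : R | ε * x * ε = x}` of `R`. -/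
def IsCornerIso (K : Type) [Field K] (S R : Type) [Ring S] [Ring R]
    [Algebra K S] [Algebra K R] (ε : R) : Prop :=
  ∃ φ : S →ₙₐ[K] R, Function.Injective φ ∧ Set.range φ = {x : R | ε * x * ε = x}

/-- A module `Q` is a generator for the category of left `R`-modules iff `R` is
an epimorphic image (equivalently, a direct summand) of a finite direct sum of
copies of `Q`. -/
def IsGenerator (R Q : Type) [Ring R] [AddCommGroup Q] [Module R Q] : Prop :=
  ∃ (n : ℕ) (f : (Fin n → Q) →ₗ[R] R), Function.Surjective f

namespace HairCorner

open LeavittPathAlgebra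

/-! ### Generators, relations and the universal property -/

section Basics

variable {K : Type} [Field K] {G : FinGraph}

theorem vert_mul_vert (v w : G.V) :
    vert K G v * vert K G w = if v = w then vert K G v else 0 := by
  have h := RingQuot.mkAlgHom_rel K (LeavittRel.vertMul (K := K) v w)
  rw [map_mul] at h
  rw [vert, vert, h]
  split_ifs <;> simp

@[simp] theorem vert_mul_self (v : G.V) : vert K G v * vert K G v = vert K G v := by
  simp [vert_mul_vert]

theorem vert_mul_of_ne {v w : G.V} (h : v ≠ w) : vert K G v * vert K G w = 0 := by
  simp [vert_mul_vert, h]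

@[simp] theorem source_mul_edge (e : G.E) : vert K G (G.s e) * edge K G e = edge K G e := by
  have h := RingQuot.mkAlgHom_rel K (LeavittRel.edgeLeft (K := K) e)
  rwa [map_mul] at h

@[simp] theorem edge_mul_range (e : G.E) : edge K G e * vert K G (G.r e) = edge K G e := by
  have h := RingQuot.mkAlgHom_rel K (LeavittRel.edgeRight (K := K) e)
  rwa [map_mul] at h

@[simp] theorem range_mul_ghost (e : G.E) : vert K G (G.r e) * ghost K G e = ghost K G e := by
  have h := RingQuot.mkAlgHom_rel K (LeavittRel.ghostLeft (K := K) e)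
  rwa [map_mul] at h

@[simp] theorem ghost_mul_source (e : G.E) : ghost K G e * vert K G (G.s e) = ghost K G e := by
  have h := RingQuot.mkAlgHom_rel K (LeavittRel.ghostRight (K := K) e)
  rwa [map_mul] at h

theorem ghost_mul_edge (e f : G.E) :
    ghost K G e * edge K G f = if e = f then vert K G (G.r e) else 0 := by
  have h := RingQuot.mkAlgHom_rel K (LeavittRel.ghostEdge (K := K) e f)
  rw [map_mul] at h
  rw [ghost, edge, h]
  split_ifs <;> simp [vert]

theorem vert_eq_sum (v : G.V) (hv : G.IsRegular v) :
    vert K G v = ∑ e ∈ Finset.univ.filter (fun e : G.E => G.s e = v),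
      edge K G e * ghost K G e := by
  have h := RingQuot.mkAlgHom_rel K (LeavittRel.cuntzKrieger (K := K) v hv)
  simp only [map_sum, map_mul] at h
  exact h

theorem one_eq_sum : (1 : LeavittPathAlgebra K G) = ∑ v : G.V, vert K G v := by
  have h := RingQuot.mkAlgHom_rel K (LeavittRel.unit (K := K) (G := G))
  simp only [map_sum, map_one] at h
  exact h

/-- Induction along the generators of a Leavitt path algebra. -/
theorem lpa_induction {C : LeavittPathAlgebra K G → Prop}
    (halg : ∀ k : K, C (algebraMap K _ k))
    (hvert : ∀ v, C (vert K G v)) (hedge : ∀ e, C (edge K G e)) (hghost : ∀ e, C (ghost K G e))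
    (hadd : ∀ a b, C a → C b → C (a + b)) (hmul : ∀ a b, C a → C b → C (a * b))
    (y : LeavittPathAlgebra K G) : C y := by
  obtain ⟨a, rfl⟩ := RingQuot.mkAlgHom_surjective K (LeavittRel K G) y
  induction a using FreeAlgebra.induction with
  | grade0 r => simpa using halg r
  | grade1 x =>
    cases x with
    | vert v => exact hvert v
    | edge e => exact hedge e
    | ghost e => exact hghost e
  | mul a b ha hb => rw [map_mul]; exact hmul _ _ ha hb
  | add a b ha hb => rw [map_add]; exact hadd _ _ ha hb

/-- Elements of a ring `R` indexed by vertices, edges and ghost edges that satisfy the defining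
relations of `L_K(G)`, except that the vertices need not sum to `1`. -/
structure PreFamily (G : FinGraph) {R : Type} [Ring R]
    (P : G.V → R) (S Sg : G.E → R) : Prop where
  vertMul : ∀ v w, P v * P w = if v = w then P v else 0
  edgeLeft : ∀ e, P (G.s e) * S e = S e
  edgeRight : ∀ e, S e * P (G.r e) = S e
  ghostLeft : ∀ e, P (G.r e) * Sg e = Sg e
  ghostRight : ∀ e, Sg e * P (G.s e) = Sg e
  ghostEdge : ∀ e f, Sg e * S f = if e = f then P (G.r e) else 0
  cuntzKrieger : ∀ v, G.IsRegular v →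
    P v = ∑ e ∈ Finset.univ.filter (fun e : G.E => G.s e = v), S e * Sg e

/-- A Leavitt `G`-family in a ring `R`: elements indexed by vertices, edges and ghost edges that
satisfy the defining relations of `L_K(G)`. -/
structure Family (G : FinGraph) {R : Type} [Ring R]
    (P : G.V → R) (S S' : G.E → R) : Prop extends PreFamily G P S S' where
  unit : (1 : R) = ∑ v, P v

/-- The universal property of `L_K(G)`. -/
theorem Family.exists_lift {R : Type} [Ring R] [Algebra K R]
    {P : G.V → R} {S S' : G.E → R} (h : Family G P S S') :
    ∃ φ : LeavittPathAlgebra K G →ₐ[K] R,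
      (∀ v, φ (vert K G v) = P v) ∧ (∀ e, φ (edge K G e) = S e) ∧
        ∀ e, φ (ghost K G e) = S' e := by
  let g : LPAGen G → R := fun x => match x with
    | .vert v => P v
    | .edge e => S e
    | .ghost e => S' e
  have hg : ∀ ⦃x y⦄, LeavittRel K G x y → FreeAlgebra.lift K g x = FreeAlgebra.lift K g y := by
    intro x y hxy
    cases hxy with
    | vertMul v w =>
      have := h.vertMul v w
      split_ifs at this ⊢ <;> simpa [g] using this
    | edgeLeft e => simpa [g] using h.edgeLeft e
    | edgeRight e => simpa [g] using h.edgeRight e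
    | ghostLeft e => simpa [g] using h.ghostLeft e
    | ghostRight e => simpa [g] using h.ghostRight e
    | ghostEdge e f =>
      have := h.ghostEdge e f
      split_ifs at this ⊢ <;> simpa [g] using this
    | cuntzKrieger v hv => simpa [g] using h.cuntzKrieger v hv
    | unit => simpa [g] using h.unit
  refine ⟨RingQuot.liftAlgHom K ⟨FreeAlgebra.lift K g, hg⟩, ?_, ?_, ?_⟩ <;> intro x <;>
    simp [vert, edge, ghost, g]

/-- A Leavitt `G`-family relative to an idempotent `ε` defines a homomorphism from `L_K(G)` to the
corner of `ε`. -/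
theorem PreFamily.exists_lift {R : Type} [Ring R] [Algebra K R] {ε : R}
    {P : G.V → R} {S S' : G.E → R} (h : PreFamily G P S S') (hsum : ∑ v, P v = ε) :
    ∃ φ : LeavittPathAlgebra K G →ₙₐ[K] R, φ 1 = ε ∧
      (∀ v, φ (vert K G v) = P v) ∧ (∀ e, φ (edge K G e) = S e) ∧
        ∀ e, φ (ghost K G e) = S' e := by
  have hPl : ∀ v, ε * P v = P v := fun v => by
    rw [← hsum, Finset.sum_mul, Finset.sum_eq_single v]
    · rw [h.vertMul, if_pos rfl]
    · intro w _ hw; rw [h.vertMul, if_neg hw]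
    · simp
  have hPr : ∀ v, P v * ε = P v := fun v => by
    rw [← hsum, Finset.mul_sum, Finset.sum_eq_single v]
    · rw [h.vertMul, if_pos rfl]
    · intro w _ hw; rw [h.vertMul, if_neg hw.symm]
    · simp
  have hε : IsIdempotentElem ε := by
    rw [IsIdempotentElem]
    nth_rewrite 2 [← hsum]
    rw [Finset.mul_sum]
    simp only [hPl, hsum]
  have mem : ∀ x : R, ε * x = x → x * ε = x → x ∈ Subsemigroup.corner ε := fun x h1 h2 =>
    (Subsemigroup.mem_corner_iff hε).2 ⟨h1, h2⟩
  let _ : Module K hε.Corner :=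
    { smul := fun k x => ⟨k • x.1, by
        obtain ⟨h1, h2⟩ := (Subsemigroup.mem_corner_iff hε).1 x.2
        exact mem _ (by rw [mul_smul_comm, h1]) (by rw [smul_mul_assoc, h2])⟩
      one_smul := fun x => Subtype.ext (one_smul K x.1)
      mul_smul := fun a b x => Subtype.ext (mul_smul a b x.1)
      smul_zero := fun a => Subtype.ext (smul_zero a)
      smul_add := fun a x y => Subtype.ext (smul_add a x.1 y.1)
      add_smul := fun a b x => Subtype.ext (add_smul a b x.1)
      zero_smul := fun x => Subtype.ext (zero_smul K x.1) }
  let _ : Algebra K hε.Corner := Algebra.ofModule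
    (fun r x y => Subtype.ext (smul_mul_assoc r x.1 y.1))
    (fun r x y => Subtype.ext (mul_smul_comm r x.1 y.1))
  have hval_sum : ∀ {ι : Type} (s : Finset ι) (g : ι → hε.Corner),
      (∑ i ∈ s, g i).1 = ∑ i ∈ s, (g i).1 := by
    intro ι s g
    exact map_sum ({ toFun := Subtype.val, map_zero' := rfl, map_add' := fun _ _ => rfl } :
      hε.Corner →+ R) g s
  let P₁ : G.V → hε.Corner := fun v => ⟨P v, mem _ (hPl v) (hPr v)⟩
  let S₁ : G.E → hε.Corner := fun e => ⟨S e, mem _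
    (by rw [← h.edgeLeft, ← mul_assoc, hPl]) (by rw [← h.edgeRight, mul_assoc, hPr])⟩
  let S₂ : G.E → hε.Corner := fun e => ⟨S' e, mem _
    (by rw [← h.ghostLeft, ← mul_assoc, hPl]) (by rw [← h.ghostRight, mul_assoc, hPr])⟩
  have hfam : Family G P₁ S₁ S₂ :=
    { vertMul := fun v w => Subtype.ext <| by
        refine (h.vertMul v w).trans ?_
        split_ifs <;> rfl
      edgeLeft := fun e => Subtype.ext (h.edgeLeft e)
      edgeRight := fun e => Subtype.ext (h.edgeRight e)
      ghostLeft := fun e => Subtype.ext (h.ghostLeft e)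
      ghostRight := fun e => Subtype.ext (h.ghostRight e)
      ghostEdge := fun e f => Subtype.ext <| by
        refine (h.ghostEdge e f).trans ?_
        split_ifs <;> rfl
      cuntzKrieger := fun v hv => Subtype.ext <| by
        rw [hval_sum]
        exact h.cuntzKrieger v hv
      unit := Subtype.ext <| by
        rw [hval_sum]
        exact hsum.symm }
  obtain ⟨φ, h1, h2, h3⟩ := hfam.exists_lift (K := K)
  refine ⟨{ toFun := fun y => (φ y).1
            map_smul' := fun k y => by rw [map_smul]; rfl
            map_zero' := by rw [map_zero]; rfl
            map_add' := fun y y' => by rw [map_add]; rfl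
            map_mul' := fun y y' => by rw [map_mul]; rfl }, ?_, fun v => ?_, fun e => ?_,
    fun e => ?_⟩
  · change (φ 1).1 = ε
    rw [map_one]; rfl
  · exact congrArg Subtype.val (h1 v)
  · exact congrArg Subtype.val (h2 e)
  · exact congrArg Subtype.val (h3 e)

end Basics

/-! ### Branching systems and the representations they define -/

/-- A branching system for `G`: a set `B` of points, each located at a vertex, on which the edges of
`G` act by injective maps `cons e` from the points at `r e` to the points at `s e`, in such a way
that the points located at a regular vertex `v` are partitioned by the images of the edges emitted
by `v`.  The partition is recorded by the first edge `ed b` and the shift `sh b` of a point, and the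
grading `gr` counts shifts. -/
structure Branching (G : FinGraph) where
  B : Type
  loc : B → G.V
  ed : B → Option G.E
  sh : B → B
  cons : G.E → B → B
  gr : B → ℤ
  ed_regular : ∀ b, G.IsRegular (loc b) → ∃ e, ed b = some e
  s_ed : ∀ b e, ed b = some e → G.s e = loc b
  loc_sh : ∀ b e, ed b = some e → loc (sh b) = G.r e
  cons_sh : ∀ b e, ed b = some e → cons e (sh b) = b
  ed_cons : ∀ b e, loc b = G.r e → ed (cons e b) = some e
  sh_cons : ∀ b e, loc b = G.r e → sh (cons e b) = b
  gr_sh : ∀ b e, ed b = some e → gr (sh b) = gr b + 1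

namespace Branching

variable {K : Type} [Field K] {G : FinGraph} (X : Branching G)

/-- Functions supported on the points at `v` form the range of this projection. -/
def opVert (K : Type) [Field K] (v : G.V) : Module.End K (X.B → K) where
  toFun g b := if X.loc b = v then g b else 0
  map_add' g h := by ext b; simp only [Pi.add_apply]; split_ifs <;> simp
  map_smul' c g := by ext b; simp

/-- The edge `e` acts by transport of functions along the shift at the points starting with `e`. -/
def opEdge (K : Type) [Field K] (e : G.E) : Module.End K (X.B → K) where
  toFun g b := if X.ed b = some e then g (X.sh b) else 0
  map_add' g h := by ext b; simp only [Pi.add_apply]; split_ifs <;> simp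
  map_smul' c g := by ext b; simp

/-- The ghost edge of `e` acts by transport of functions along `cons e`. -/
def opGhost (K : Type) [Field K] (e : G.E) : Module.End K (X.B → K) where
  toFun g b := if X.loc b = G.r e then g (X.cons e b) else 0
  map_add' g h := by ext b; simp only [Pi.add_apply]; split_ifs <;> simp
  map_smul' c g := by ext b; simp

theorem opVert_apply (v : G.V) (g : X.B → K) (b : X.B) :
    X.opVert K v g b = if X.loc b = v then g b else 0 := rfl

theorem opEdge_apply (e : G.E) (g : X.B → K) (b : X.B) :
    X.opEdge K e g b = if X.ed b = some e then g (X.sh b) else 0 := rfl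

theorem opGhost_apply (e : G.E) (g : X.B → K) (b : X.B) :
    X.opGhost K e g b = if X.loc b = G.r e then g (X.cons e b) else 0 := rfl

theorem family : Family G (X.opVert K) (X.opEdge K) (X.opGhost K) where
  vertMul v w := by
    refine LinearMap.ext fun g => funext fun b => ?_
    rw [Module.End.mul_apply]
    by_cases hvw : v = w
    · subst hvw; simp only [opVert_apply, if_true]; split_ifs <;> rfl
    · rw [if_neg hvw]
      simp only [opVert_apply, LinearMap.zero_apply, Pi.zero_apply]
      split_ifs with h1 h2
      · exact absurd (h1.symm.trans h2) hvw
      · rfl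
      · rfl
  edgeLeft e := by
    refine LinearMap.ext fun g => funext fun b => ?_
    rw [Module.End.mul_apply]
    simp only [opVert_apply, opEdge_apply]
    split_ifs with h1 h2 h2
    · rfl
    · rfl
    · exact absurd (X.s_ed b e h2).symm h1
    · rfl
  edgeRight e := by
    refine LinearMap.ext fun g => funext fun b => ?_
    rw [Module.End.mul_apply]
    simp only [opVert_apply, opEdge_apply]
    split_ifs with h1 h2
    · rfl
    · exact absurd (X.loc_sh b e h1) h2
    · rfl
  ghostLeft e := by
    refine LinearMap.ext fun g => funext fun b => ?_
    rw [Module.End.mul_apply]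
    simp only [opVert_apply, opGhost_apply]
    split_ifs <;> rfl
  ghostRight e := by
    refine LinearMap.ext fun g => funext fun b => ?_
    rw [Module.End.mul_apply]
    simp only [opVert_apply, opGhost_apply]
    split_ifs with h1 h2
    · rfl
    · exact absurd (X.s_ed _ e (X.ed_cons b e h1)).symm h2
    · rfl
  ghostEdge e f := by
    refine LinearMap.ext fun g => funext fun b => ?_
    rw [Module.End.mul_apply]
    by_cases hef : e = f
    · subst hef
      simp only [if_true, opVert_apply, opEdge_apply, opGhost_apply]
      split_ifs with h1 h2
      · rw [X.sh_cons b e h1]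
      · exact absurd (X.ed_cons b e h1) h2
      · rfl
    · rw [if_neg hef]
      simp only [opEdge_apply, opGhost_apply, LinearMap.zero_apply, Pi.zero_apply]
      split_ifs with h1 h2
      · rw [X.ed_cons b e h1] at h2
        exact absurd (Option.some.inj h2) hef
      · rfl
      · rfl
  cuntzKrieger v hv := by
    refine LinearMap.ext fun g => funext fun b => ?_
    rw [LinearMap.sum_apply, Finset.sum_apply]
    simp only [Module.End.mul_apply, opVert_apply, opEdge_apply, opGhost_apply]
    by_cases hb : X.loc b = v
    · obtain ⟨e, he⟩ := X.ed_regular b (hb ▸ hv)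
      rw [if_pos hb, Finset.sum_eq_single e]
      · rw [if_pos he, if_pos (X.loc_sh b e he), X.cons_sh b e he]
      · intro f _ hf
        rw [if_neg]
        rw [he]
        exact fun h => hf (Option.some.inj h).symm
      · intro h
        exact absurd (by simp [X.s_ed b e he, hb]) h
    · rw [if_neg hb]
      refine (Finset.sum_eq_zero fun e he => ?_).symm
      rw [if_neg]
      intro h
      exact hb ((X.s_ed b e h).symm.trans (Finset.mem_filter.1 he).2)
  unit := by
    refine LinearMap.ext fun g => funext fun b => ?_
    rw [LinearMap.sum_apply, Finset.sum_apply]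
    simp [opVert_apply]

end Branching

/-- If the vertices outside `alive` form a hereditary and saturated set, then there is a branching
system whose points are located exactly at the alive vertices.  There are countably many points at
each alive vertex, indexed by `ℕ × ℤ`; a regular vertex `v` only requires a bijection between `ℕ` and
the product of `ℕ` with the finite nonempty set of edges from `v` to an alive vertex.  The factor `ℤ`
carries the grading. -/
theorem exists_branching (G : FinGraph) (alive : G.V → Prop)
    (hher : ∀ e, alive (G.r e) → alive (G.s e))
    (hsat : ∀ v, alive v → G.IsRegular v → ∃ e, G.s e = v ∧ alive (G.r e)) :
    ∃ X : Branching G, (∀ b, alive (X.loc b)) ∧ ∀ v, alive v → ∃ b, X.loc b = v := by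
  classical
  -- `d v n` and `q v n` are the first edge and the shifted index of the `n`-th point at `v`, and
  -- `k v` is the inverse of `(d v, q v)`.
  have hdata : ∀ v : G.V, ∃ (d : ℕ → Option G.E) (q : ℕ → ℕ) (k : G.E → ℕ → ℕ),
      (alive v → G.IsRegular v → ∀ n, ∃ e, d n = some e) ∧
      (∀ n e, d n = some e → G.s e = v ∧ alive (G.r e) ∧ k e (q n) = n) ∧
      (∀ e n, G.s e = v → alive (G.r e) → d (k e n) = some e ∧ q (k e n) = n) := by
    intro v
    by_cases hv : ∃ e, G.s e = v ∧ alive (G.r e)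
    · obtain ⟨e, he⟩ := hv
      have : Nonempty {e : G.E // G.s e = v ∧ alive (G.r e)} := ⟨⟨e, he⟩⟩
      obtain ⟨ψ⟩ : Nonempty (ℕ ≃ {e : G.E // G.s e = v ∧ alive (G.r e)} × ℕ) := inferInstance
      refine ⟨fun n => some (ψ n).1.1, fun n => (ψ n).2,
        fun e n => if h : G.s e = v ∧ alive (G.r e) then ψ.symm (⟨e, h⟩, n) else 0,
        fun _ _ n => ⟨_, rfl⟩, ?_, ?_⟩
      · intro n e h
        have h' := Option.some.inj h
        subst h'
        refine ⟨(ψ n).1.2.1, (ψ n).1.2.2, ?_⟩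
        dsimp only
        rw [dif_pos (ψ n).1.2]
        simp
      · intro e n h1 h2
        simp [h1, h2]
    · refine ⟨fun _ => none, fun _ => 0, fun _ _ => 0, ?_, ?_, ?_⟩
      · intro h1 h2
        exact absurd (hsat v h1 h2) hv
      · simp
      · intro e n h1 h2
        exact absurd ⟨e, h1, h2⟩ hv
  choose d q k hd1 hd2 hd3 using hdata
  refine ⟨{
    B := {b : G.V × ℕ × ℤ // alive b.1}
    loc := fun b => b.1.1
    ed := fun b => d b.1.1 b.1.2.1
    sh := fun b => ⟨((d b.1.1 b.1.2.1).elim b.1.1 G.r, q b.1.1 b.1.2.1, b.1.2.2 + 1), by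
      rcases h : d b.1.1 b.1.2.1 with _ | e
      · exact b.2
      · exact (hd2 _ _ _ h).2.1⟩
    cons := fun e b => if h : b.1.1 = G.r e then
      ⟨(G.s e, k (G.s e) e b.1.2.1, b.1.2.2 - 1), hher e (h ▸ b.2)⟩ else b
    gr := fun b => b.1.2.2
    ed_regular := fun b h => hd1 _ b.2 h _
    s_ed := fun b e h => (hd2 _ _ _ h).1
    loc_sh := fun b e h => by simp [h]
    cons_sh := ?_
    ed_cons := ?_
    sh_cons := ?_
    gr_sh := fun b e h => rfl }, fun b => b.2, fun v hv => ⟨⟨(v, 0, 0), hv⟩, rfl⟩⟩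
  · rintro ⟨⟨v, n, t⟩, hv⟩ e h
    obtain ⟨h1, h2, h3⟩ := hd2 _ _ _ h
    dsimp only at h h1 h3
    subst h1
    simp [h, h3]
  · rintro ⟨⟨v, n, t⟩, hv⟩ e h
    dsimp only at h hv
    subst h
    simpa using (hd3 _ e n rfl hv).1
  · rintro ⟨⟨v, n, t⟩, hv⟩ e h
    dsimp only at h hv
    subst h
    simp [hd3 _ e n rfl hv]


/-! ### Paths and their linear independence -/

section Words

variable (K : Type) [Field K] {G : FinGraph}

/-- The product in `L_K(G)` of a list of edges. -/
def edges (l : List G.E) : LeavittPathAlgebra K G := (l.map (edge K G)).prod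

/-- The element of `L_K(G)` given by a starting vertex and a list of edges. -/
def word (w : G.V × List G.E) : LeavittPathAlgebra K G := vert K G w.1 * edges K w.2

variable {K}

/-- `Valid v l` says that the list of edges `l` is a path starting at `v`. -/
def Valid (v : G.V) : List G.E → Prop
  | [] => True
  | e :: l => G.s e = v ∧ Valid (G.r e) l

/-- The end of the path `l` starting at `v`. -/
def tgt (v : G.V) : List G.E → G.V
  | [] => v
  | e :: l => tgt (G.r e) l

theorem valid_append {v : G.V} {l l' : List G.E} :
    Valid v (l ++ l') ↔ Valid v l ∧ Valid (tgt v l) l' := by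
  induction l generalizing v with
  | nil => simp [Valid, tgt]
  | cons e l ih => simp [Valid, tgt, ih, and_assoc]

theorem tgt_append {v : G.V} {l l' : List G.E} : tgt v (l ++ l') = tgt (tgt v l) l' := by
  induction l generalizing v with
  | nil => simp [tgt]
  | cons e l ih => simp [tgt, ih]

@[simp] theorem edges_nil : edges K ([] : List G.E) = 1 := by simp [edges]

theorem edges_cons (e : G.E) (l : List G.E) : edges K (e :: l) = edge K G e * edges K l := by
  simp [edges]

theorem edges_append (l l' : List G.E) : edges K (l ++ l') = edges K l * edges K l' := by
  simp [edges]

@[simp] theorem word_nil (v : G.V) : word K (v, []) = vert K G v := by simp [word]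

theorem word_cons {v : G.V} {e : G.E} (l : List G.E) (h : G.s e = v) :
    word K (v, e :: l) = edge K G e * word K (G.r e, l) := by
  subst h
  rw [word, word, edges_cons, ← mul_assoc, ← mul_assoc, source_mul_edge, edge_mul_range]

theorem word_mul_edges (v : G.V) (l l' : List G.E) :
    word K (v, l) * edges K l' = word K (v, l ++ l') := by
  rw [word, word, edges_append, mul_assoc]

theorem vert_mul_word (v : G.V) (l : List G.E) : vert K G v * word K (v, l) = word K (v, l) := by
  rw [word, ← mul_assoc, vert_mul_self]

theorem word_mul_tgt {v : G.V} {l : List G.E} (h : Valid v l) :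
    word K (v, l) * vert K G (tgt v l) = word K (v, l) := by
  induction l generalizing v with
  | nil => simp [tgt]
  | cons e l ih => rw [word_cons l h.1, mul_assoc, tgt, ih h.2]

theorem word_mul_vert {v : G.V} {l : List G.E} (h : Valid v l) (u : G.V) :
    word K (v, l) * vert K G u = if tgt v l = u then word K (v, l) else 0 := by
  split_ifs with hu
  · rw [← hu, word_mul_tgt h]
  · rw [← word_mul_tgt h, mul_assoc, vert_mul_of_ne hu, mul_zero]

theorem word_mul_word {v : G.V} {l : List G.E} (h : Valid v l) (u : G.V) (l' : List G.E) :
    word K (v, l) * word K (u, l') = if tgt v l = u then word K (v, l ++ l') else 0 := by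
  have h' : word K (u, l') = vert K G u * edges K l' := rfl
  rw [h', ← mul_assoc, word_mul_vert h]
  split_ifs
  · rw [word_mul_edges]
  · rw [zero_mul]

/-- The set of paths of `G`. -/
def paths (G : FinGraph) : Set (G.V × List G.E) := {w | Valid w.1 w.2}

/-- The set of paths of `G` that end at `u`. -/
def pathsTo (u : G.V) : Set (G.V × List G.E) := {w | Valid w.1 w.2 ∧ tgt w.1 w.2 = u}

variable (K) in
/-- Evaluation in `L_K(G)` of a formal linear combination of words. -/
noncomputable def ev : (G.V × List G.E →₀ K) →ₗ[K] LeavittPathAlgebra K G :=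
  Finsupp.linearCombination K (word K)

namespace Branching

variable (X : Branching G)

/-- The list `l` is an initial segment of the itinerary of the point `b`. -/
def Reads : List G.E → X.B → Prop
  | [], _ => True
  | e :: l, b => X.ed b = some e ∧ Reads l (X.sh b)

open Classical in
theorem opEdge_prod_apply (l : List G.E) (g : X.B → K) (b : X.B) :
    (l.map (X.opEdge K)).prod g b = if X.Reads l b then g (X.sh^[l.length] b) else 0 := by
  induction l generalizing b with
  | nil => simp [Reads]
  | cons e l ih =>
    rw [List.map_cons, List.prod_cons, Module.End.mul_apply, opEdge_apply, ih]
    by_cases h : X.ed b = some e <;> simp [Reads, h]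

theorem gr_iterate {l : List G.E} {b : X.B} (h : X.Reads l b) :
    X.gr (X.sh^[l.length] b) = X.gr b + l.length := by
  induction l generalizing b with
  | nil => simp
  | cons e l ih =>
    rw [List.length_cons, Function.iterate_succ_apply, ih h.2, X.gr_sh b e h.1]
    push_cast
    ring

theorem Reads.eq_of_length_eq {l l' : List G.E} {b : X.B} (h : X.Reads l b) (h' : X.Reads l' b)
    (hl : l.length = l'.length) : l = l' := by
  induction l generalizing b l' with
  | nil => exact (List.length_eq_zero_iff.1 hl.symm).symm
  | cons e l ih =>
    cases l' with
    | nil => simp at hl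
    | cons e' l' =>
      have he : e = e' := Option.some.inj (h.1.symm.trans h'.1)
      rw [he, ih h.2 h'.2 (by simpa using hl)]

theorem exists_reads {v : G.V} {l : List G.E} (h : Valid v l) (b₀ : X.B)
    (hb₀ : X.loc b₀ = tgt v l) :
    ∃ b, X.loc b = v ∧ X.Reads l b ∧ X.sh^[l.length] b = b₀ := by
  induction l generalizing v with
  | nil => exact ⟨b₀, hb₀, trivial, rfl⟩
  | cons e l ih =>
    obtain ⟨b, hb1, hb2, hb3⟩ := ih h.2 hb₀
    refine ⟨X.cons e b, ?_, ⟨X.ed_cons b e hb1, ?_⟩, ?_⟩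
    · rw [← X.s_ed _ e (X.ed_cons b e hb1), h.1]
    · rwa [X.sh_cons b e hb1]
    · rw [List.length_cons, Function.iterate_succ_apply, X.sh_cons b e hb1, hb3]

end Branching

/-- Distinct paths are linearly independent in `L_K(G)`.  In the representation defined by a
branching system the coefficient of a path `l` is read off at a point `b` whose itinerary starts
with `l`: the grading recovers the length of a path from the shifted point, and the itinerary of `b`
then recovers the path. -/
theorem ev_injOn {f : G.V × List G.E →₀ K} (hf : f ∈ Finsupp.supported K K (paths G))
    (h0 : ev K f = 0) : f = 0 := by
  classical
  obtain ⟨X, -, hX⟩ := exists_branching G (fun _ => True) (fun _ _ => trivial)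
    (fun v _ ⟨e, he⟩ => ⟨e, he, trivial⟩)
  obtain ⟨π, hπ1, hπ2, -⟩ := (X.family (K := K)).exists_lift (K := K)
  have hword : ∀ (v : G.V) (l : List G.E) (g : X.B → K) (b : X.B), π (word K (v, l)) g b =
      if X.loc b = v ∧ X.Reads l b then g (X.sh^[l.length] b) else 0 := by
    intro v l g b
    have : π (edges K l) = (l.map (X.opEdge K)).prod := by
      rw [edges, map_list_prod, List.map_map]
      congr 1
      exact List.map_congr_left fun e _ => hπ2 e
    rw [word, map_mul, Module.End.mul_apply, this, hπ1, Branching.opVert_apply,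
      Branching.opEdge_prod_apply, ite_and]
  ext w
  by_cases hw : w ∈ f.support
  · have hval : Valid w.1 w.2 := hf hw
    obtain ⟨b₀, hb₀⟩ := hX (tgt w.1 w.2) trivial
    obtain ⟨b, hb1, hb2, hb3⟩ := X.exists_reads hval b₀ hb₀
    have h1 : π (ev K f) (Pi.single b₀ 1) b = f w := by
      rw [ev, Finsupp.linearCombination_apply, Finsupp.sum, map_sum, LinearMap.sum_apply,
        Finset.sum_apply, Finset.sum_eq_single w]
      · rw [map_smul, LinearMap.smul_apply, Pi.smul_apply, hword, if_pos ⟨hb1, hb2⟩, hb3]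
        simp
      · rintro ⟨v', l'⟩ hw' hne
        rw [map_smul, LinearMap.smul_apply, Pi.smul_apply, hword]
        by_cases hr : X.loc b = v' ∧ X.Reads l' b
        · rw [if_pos hr]
          have hne' : X.sh^[l'.length] b ≠ b₀ := by
            intro heq
            have h2 := X.gr_iterate hr.2
            have h3 := X.gr_iterate hb2
            rw [heq] at h2
            rw [hb3] at h3
            have h4 : l'.length = w.2.length := by omega
            exact hne (Prod.ext (hr.1.symm.trans hb1)
              (Branching.Reads.eq_of_length_eq X hr.2 hb2 h4))
          simp [Pi.single_eq_of_ne hne']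
        · rw [if_neg hr, smul_zero]
      · intro h
        exact absurd hw h
    rw [← h1, h0]
    simp
  · simpa using hw

/-! ### The path algebra inside the Leavitt path algebra -/

variable (K G) in
/-- The subalgebra of `L_K(G)` generated by the vertices and the (real) edges. -/
def PathAlg : Subalgebra K (LeavittPathAlgebra K G) :=
  Algebra.adjoin K (Set.range (vert K G) ∪ Set.range (edge K G))

theorem vert_mem (v : G.V) : vert K G v ∈ PathAlg K G :=
  Algebra.subset_adjoin (Or.inl ⟨v, rfl⟩)

theorem edge_mem (e : G.E) : edge K G e ∈ PathAlg K G :=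
  Algebra.subset_adjoin (Or.inr ⟨e, rfl⟩)

theorem mem_span_paths {a : LeavittPathAlgebra K G} (ha : a ∈ PathAlg K G) :
    a ∈ Submodule.span K (word K '' paths G) := by
  have hone : (1 : LeavittPathAlgebra K G) ∈ Submodule.span K (word K '' paths G) := by
    rw [one_eq_sum]
    exact Submodule.sum_mem _ fun v _ => Submodule.subset_span ⟨(v, []), trivial, word_nil v⟩
  have hmul : ∀ x y : LeavittPathAlgebra K G, x ∈ Submodule.span K (word K '' paths G) →
      y ∈ Submodule.span K (word K '' paths G) → x * y ∈ Submodule.span K (word K '' paths G) := by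
    intro x y hx hy
    have hxy := Submodule.mul_mem_mul hx hy
    rw [Submodule.span_mul_span] at hxy
    refine Submodule.span_le.2 ?_ hxy
    rintro _ ⟨_, ⟨⟨v, l⟩, hv, rfl⟩, _, ⟨⟨u, l'⟩, hu, rfl⟩, rfl⟩
    change word K (v, l) * word K (u, l') ∈ _
    rw [word_mul_word hv]
    split_ifs with h
    · exact Submodule.subset_span ⟨(v, l ++ l'), valid_append.2 ⟨hv, h.symm ▸ hu⟩, rfl⟩
    · exact zero_mem _
  have hle : PathAlg K G ≤ (Submodule.span K (word K '' paths G)).toSubalgebra hone hmul := by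
    refine Algebra.adjoin_le ?_
    rintro _ (⟨v, rfl⟩ | ⟨e, rfl⟩)
    · exact Submodule.subset_span ⟨(v, []), trivial, word_nil v⟩
    · refine Submodule.subset_span ⟨(G.s e, [e]), ⟨rfl, trivial⟩, ?_⟩
      rw [word_cons [] rfl, word_nil, edge_mul_range]
  exact hle ha

theorem exists_ev_eq {a : LeavittPathAlgebra K G} (ha : a ∈ PathAlg K G) (u : G.V) :
    ∃ f ∈ Finsupp.supported K K (pathsTo u), ev K f = a * vert K G u := by
  refine (Finsupp.mem_span_image_iff_linearCombination K).1 ?_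
  refine Submodule.span_induction (p := fun a _ => a * vert K G u ∈
    Submodule.span K (word K '' pathsTo u)) ?_ ?_ ?_ ?_ (mem_span_paths ha)
  · rintro _ ⟨⟨v, l⟩, hv, rfl⟩
    rw [word_mul_vert hv]
    split_ifs with h
    · exact Submodule.subset_span ⟨(v, l), ⟨hv, h⟩, rfl⟩
    · exact zero_mem _
  · rw [zero_mul]; exact zero_mem _
  · intro x y _ _ hx hy
    rw [add_mul]; exact add_mem hx hy
  · intro c x _ hx
    rw [smul_mul_assoc]; exact Submodule.smul_mem _ _ hx

theorem exists_lists_eq {a : LeavittPathAlgebra K G} (ha : a ∈ PathAlg K G) (u : G.V) :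
    ∃ g ∈ Finsupp.supported K K {l : List G.E | Valid u l},
      vert K G u * a = g.sum fun l c => c • word K (u, l) := by
  have : vert K G u * a ∈ Submodule.span K ((fun l => word K (u, l)) '' {l | Valid u l}) := by
    refine Submodule.span_induction (p := fun a _ => vert K G u * a ∈
      Submodule.span K ((fun l => word K (u, l)) '' {l | Valid u l})) ?_ ?_ ?_ ?_
      (mem_span_paths ha)
    · rintro _ ⟨⟨v, l⟩, hv, rfl⟩
      rw [word, ← mul_assoc, vert_mul_vert]
      split_ifs with h
      · subst h
        exact Submodule.subset_span ⟨l, hv, rfl⟩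
      · rw [zero_mul]; exact zero_mem _
    · rw [mul_zero]; exact zero_mem _
    · intro x y _ _ hx hy
      rw [mul_add]; exact add_mem hx hy
    · intro c x _ hx
      rw [mul_smul_comm]; exact Submodule.smul_mem _ _ hx
  obtain ⟨g, hg, h⟩ := (Finsupp.mem_span_image_iff_linearCombination K).1 this
  exact ⟨g, hg, by rw [← h, Finsupp.linearCombination_apply]⟩

/-! ### Right denominators -/

/-- `y` has right denominators: there are finitely many `a i` in the path algebra with
`∑ a i * a' i = 1` and `y * a i` in the path algebra. -/
def HasDenom (y : LeavittPathAlgebra K G) : Prop :=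
  ∃ (ι : Type) (_ : Fintype ι) (a a' : ι → LeavittPathAlgebra K G),
    (∀ i, a i ∈ PathAlg K G) ∧ ∑ i, a i * a' i = 1 ∧ ∀ i, y * a i ∈ PathAlg K G

theorem HasDenom.of_mem {y : LeavittPathAlgebra K G} (h : y ∈ PathAlg K G) : HasDenom y :=
  ⟨Unit, inferInstance, fun _ => 1, fun _ => 1, fun _ => one_mem _, by simp, fun _ => by simpa⟩

theorem HasDenom.comp {y : LeavittPathAlgebra K G} {ι : Type} [Fintype ι]
    {a a' : ι → LeavittPathAlgebra K G} (ha : ∀ i, a i ∈ PathAlg K G)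
    (h1 : ∑ i, a i * a' i = 1) (hy : ∀ i, HasDenom (y * a i)) : HasDenom y := by
  choose κ hκ b b' hb hb1 hyb using hy
  refine ⟨Σ i, κ i, inferInstance, fun p => a p.1 * b p.1 p.2, fun p => b' p.1 p.2 * a' p.1,
    fun p => mul_mem (ha _) (hb _ _), ?_, fun p => ?_⟩
  · rw [Fintype.sum_sigma, ← h1]
    refine Finset.sum_congr rfl fun i _ => ?_
    calc ∑ j, a i * b i j * (b' i j * a' i) = ∑ j, a i * (b i j * b' i j) * a' i := by
          simp only [mul_assoc]
      _ = a i * a' i := by rw [← Finset.sum_mul, ← Finset.mul_sum, hb1, mul_one]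
  · rw [← mul_assoc]; exact hyb _ _

theorem HasDenom.mul_left_of_mem {y a : LeavittPathAlgebra K G} (hy : y ∈ PathAlg K G)
    (ha : HasDenom a) : HasDenom (y * a) := by
  obtain ⟨ι, _, b, b', hb, h1, h2⟩ := ha
  exact ⟨ι, _, b, b', hb, h1, fun i => by rw [mul_assoc]; exact mul_mem hy (h2 i)⟩

theorem HasDenom.add {x y : LeavittPathAlgebra K G} (hx : HasDenom x)
    (hy : ∀ a ∈ PathAlg K G, HasDenom (y * a)) : HasDenom (x + y) := by
  obtain ⟨ι, _, a, a', ha, h1, h2⟩ := hx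
  refine HasDenom.comp ha h1 fun i => ?_
  obtain ⟨κ, _, b, b', hb, h3, h4⟩ := hy (a i) (ha i)
  refine ⟨κ, _, b, b', hb, h3, fun j => ?_⟩
  rw [add_mul, add_mul]
  exact add_mem (mul_mem (h2 i) (hb j)) (h4 j)

theorem sum_edge_mul_ghost [DecidablePred G.IsRegular] :
    ∑ v : G.V, (if G.IsRegular v then 0 else vert K G v) + ∑ e : G.E, edge K G e * ghost K G e
      = 1 := by
  rw [one_eq_sum, ← Finset.sum_fiberwise (s := Finset.univ) (g := G.s), ← Finset.sum_add_distrib]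
  refine Finset.sum_congr rfl fun v _ => ?_
  split_ifs with h
  · rw [zero_add, vert_eq_sum v h]
  · rw [Finset.sum_eq_zero, add_zero]
    intro e he
    exact absurd ⟨e, (Finset.mem_filter.1 he).2⟩ h

theorem hasDenom_ghost (e : G.E) : HasDenom (ghost K G e) := by
  classical
  refine ⟨G.V ⊕ G.E, inferInstance,
    Sum.elim (fun v => if G.IsRegular v then 0 else vert K G v) (edge K G),
    Sum.elim (vert K G) (ghost K G), ?_, ?_, ?_⟩
  · rintro (v | f)
    · simp only [Sum.elim_inl]
      split_ifs
      · exact zero_mem _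
      · exact vert_mem v
    · exact edge_mem f
  · rw [Fintype.sum_sum_type, ← sum_edge_mul_ghost (K := K) (G := G)]
    congr 1
    refine Finset.sum_congr rfl fun v _ => ?_
    simp only [Sum.elim_inl]
    split_ifs <;> simp
  · rintro (v | f)
    · simp only [Sum.elim_inl]
      split_ifs with h
      · rw [mul_zero]; exact zero_mem _
      · have hne : G.s e ≠ v := fun h' => h ⟨e, h'⟩
        rw [← ghost_mul_source, mul_assoc, vert_mul_of_ne hne, mul_zero]
        exact zero_mem _
    · simp only [Sum.elim_inr]
      rw [ghost_mul_edge]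
      split_ifs
      · exact vert_mem _
      · exact zero_mem _

/-- Left multiplication by a ghost edge leaves the path algebra only by a multiple of that edge. -/
theorem exists_ghost_mul_eq (e : G.E) {a : LeavittPathAlgebra K G} (ha : a ∈ PathAlg K G) :
    ∃ c : K, ∃ b ∈ PathAlg K G, ghost K G e * a = c • ghost K G e + b := by
  refine Algebra.adjoin_induction (p := fun a _ => ∃ c : K, ∃ b ∈ PathAlg K G,
    ghost K G e * a = c • ghost K G e + b) ?_ ?_ ?_ ?_ ha
  · rintro _ (⟨v, rfl⟩ | ⟨f, rfl⟩)
    · by_cases h : G.s e = v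
      · exact ⟨1, 0, zero_mem _, by subst h; simp⟩
      · refine ⟨0, 0, zero_mem _, ?_⟩
        rw [← ghost_mul_source, mul_assoc, vert_mul_of_ne h]
        simp
    · refine ⟨0, ghost K G e * edge K G f, ?_, by simp⟩
      rw [ghost_mul_edge]
      split_ifs
      · exact vert_mem _
      · exact zero_mem _
  · intro c
    refine ⟨c, 0, zero_mem _, ?_⟩
    rw [add_zero, Algebra.smul_def, Algebra.commutes]
  · rintro x y _ _ ⟨c, b, hb, h⟩ ⟨c', b', hb', h'⟩
    refine ⟨c + c', b + b', add_mem hb hb', ?_⟩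
    rw [mul_add, h, h', add_smul]
    abel
  · rintro x y _ hy ⟨c, b, hb, h⟩ ⟨c', b', hb', h'⟩
    refine ⟨c * c', c • b' + b * y, add_mem (Subalgebra.smul_mem _ hb' c) (mul_mem hb hy), ?_⟩
    rw [← mul_assoc, h, add_mul, smul_mul_assoc, h', smul_add, smul_smul, add_assoc]

theorem hasDenom_ghost_mul (e : G.E) {y : LeavittPathAlgebra K G} (hy : HasDenom y) :
    HasDenom (ghost K G e * y) := by
  obtain ⟨ι, _, a, a', ha, h1, h2⟩ := hy
  refine HasDenom.comp ha h1 fun i => ?_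
  obtain ⟨c, b, hb, h⟩ := exists_ghost_mul_eq e (h2 i)
  rw [mul_assoc, h]
  refine HasDenom.add ?_ fun a ha => HasDenom.of_mem (mul_mem hb ha)
  rw [← one_mul (ghost K G e), ← smul_mul_assoc]
  exact HasDenom.mul_left_of_mem (Subalgebra.smul_mem _ (one_mem _) c) (hasDenom_ghost e)

/-- Every element of `L_K(G)` has right denominators. -/
theorem hasDenom (y : LeavittPathAlgebra K G) : HasDenom y := by
  suffices h : ∀ w : LeavittPathAlgebra K G, (∀ c ∈ PathAlg K G, HasDenom (w * c)) →
      ∀ c ∈ PathAlg K G, HasDenom (y * w * c) by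
    simpa using h 1 (fun c hc => by rw [one_mul]; exact HasDenom.of_mem hc) 1 (one_mem _)
  induction y using lpa_induction with
  | halg k =>
    intro w hw c hc
    rw [mul_assoc]
    exact HasDenom.mul_left_of_mem (Subalgebra.algebraMap_mem _ k) (hw c hc)
  | hvert v =>
    intro w hw c hc
    rw [mul_assoc]
    exact HasDenom.mul_left_of_mem (vert_mem v) (hw c hc)
  | hedge e =>
    intro w hw c hc
    rw [mul_assoc]
    exact HasDenom.mul_left_of_mem (edge_mem e) (hw c hc)
  | hghost e =>
    intro w hw c hc
    rw [mul_assoc]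
    exact hasDenom_ghost_mul e (hw c hc)
  | hmul a b ha hb => exact fun w hw c hc => by rw [mul_assoc a]; exact ha _ (hb _ hw) c hc
  | hadd a b ha hb =>
    intro w hw c hc
    rw [add_mul, add_mul]
    refine HasDenom.add (ha w hw c hc) fun d hd => ?_
    rw [mul_assoc _ c d]
    exact hb w hw _ (mul_mem hc hd)

/-- Finitely many elements of `L_K(G)` have common right denominators. -/
theorem exists_common_denom (s : Finset (LeavittPathAlgebra K G)) :
    ∃ (ι : Type) (_ : Fintype ι) (a a' : ι → LeavittPathAlgebra K G),
      (∀ i, a i ∈ PathAlg K G) ∧ ∑ i, a i * a' i = 1 ∧ ∀ y ∈ s, ∀ i, y * a i ∈ PathAlg K G := by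
  classical
  induction s using Finset.induction_on with
  | empty =>
    exact ⟨Unit, inferInstance, fun _ => 1, fun _ => 1, fun _ => one_mem _, by simp, by simp⟩
  | insert y s _ ih =>
    obtain ⟨ι, _, a, a', ha, h1, h2⟩ := ih
    choose κ hκ b b' hb hb1 hyb using fun i => hasDenom (y * a i)
    refine ⟨Σ i, κ i, inferInstance, fun p => a p.1 * b p.1 p.2, fun p => b' p.1 p.2 * a' p.1,
      fun p => mul_mem (ha _) (hb _ _), ?_, fun x hx p => ?_⟩
    · rw [Fintype.sum_sigma, ← h1]
      refine Finset.sum_congr rfl fun i _ => ?_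
      calc ∑ j, a i * b i j * (b' i j * a' i) = ∑ j, a i * (b i j * b' i j) * a' i := by
            simp only [mul_assoc]
        _ = a i * a' i := by rw [← Finset.sum_mul, ← Finset.mul_sum, hb1, mul_one]
    · rw [← mul_assoc]
      rcases Finset.mem_insert.1 hx with rfl | hx
      · exact hyb _ _
      · exact mul_mem (h2 x hx _) (hb _ _)

/-- A homomorphism out of `L_K(G)` is injective as soon as it is injective on the path algebra. -/
theorem injective_of_pathAlg {R : Type} [Ring R] [Algebra K R]
    (φ : LeavittPathAlgebra K G →ₙₐ[K] R)
    (h : ∀ a ∈ PathAlg K G, φ a = 0 → a = 0) : Function.Injective φ := by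
  refine (injective_iff_map_eq_zero φ).2 fun y hy => ?_
  obtain ⟨ι, _, a, a', -, h1, h2⟩ := hasDenom y
  rw [← mul_one y, ← h1, Finset.mul_sum]
  refine Finset.sum_eq_zero fun i _ => ?_
  rw [← mul_assoc, h _ (h2 i) (by rw [map_mul, hy, zero_mul]), zero_mul]

end Words

/-! ### A monotone numbering of words -/

section Key

variable {G : FinGraph}

/-- The base of the numeral system used to number words. -/
def keyBase (G : FinGraph) : ℕ := Fintype.card G.V + Fintype.card G.E + 2

/-- Reading a word as a numeral whose leading digit is its starting vertex. -/
noncomputable def key (w : G.V × List G.E) : ℕ :=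
  w.2.foldl (fun a e => a * keyBase G + (Fintype.equivFin G.E e : ℕ)) (Fintype.equivFin G.V w.1 + 1)

/-- The word obtained by appending a list of edges. -/
def app (w : G.V × List G.E) (l : List G.E) : G.V × List G.E := (w.1, w.2 ++ l)

theorem app_injective (l : List G.E) : Function.Injective fun w : G.V × List G.E => app w l := by
  rintro ⟨v, k⟩ ⟨v', k'⟩ h
  simpa [app] using h

theorem key_app (w : G.V × List G.E) (l : List G.E) : key (app w l) =
    l.foldl (fun a e => a * keyBase G + (Fintype.equivFin G.E e : ℕ)) (key w) := by
  simp [key, app]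

theorem key_app_lt {w w' : G.V × List G.E} (h : key w < key w') (l : List G.E) :
    key (app w l) < key (app w' l) := by
  rw [key_app, key_app]
  generalize key w = a at h ⊢
  generalize key w' = b at h ⊢
  induction l generalizing a b with
  | nil => exact h
  | cons e l ih =>
    refine ih _ _ ?_
    have : 0 < keyBase G := by simp [keyBase]
    have := Nat.mul_lt_mul_of_pos_right h this
    dsimp only
    omega

theorem key_pos (w : G.V × List G.E) : 0 < key w := by
  obtain ⟨v, l⟩ := w
  induction l using List.reverseRecOn with
  | nil => simp [key]
  | append_singleton l e ih =>
    have h : key (v, l ++ [e]) = key (v, l) * keyBase G + (Fintype.equivFin G.E e : ℕ) := by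
      simp [key]
    rw [h]
    have : 0 < keyBase G := by simp [keyBase]
    positivity

theorem key_injective : Function.Injective (key (G := G)) := by
  rintro ⟨v, l⟩ ⟨v', l'⟩ h
  have hsnoc : ∀ (v : G.V) (l : List G.E) (e : G.E), key (v, l ++ [e]) =
      key (v, l) * keyBase G + (Fintype.equivFin G.E e : ℕ) := by
    intro v l e
    simp [key]
  have hdig : ∀ e : G.E, (Fintype.equivFin G.E e : ℕ) < keyBase G := by
    intro e
    have := (Fintype.equivFin G.E e).isLt
    simp only [keyBase]
    omega
  have hbase : ∀ v : G.V, key (v, []) < keyBase G := by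
    intro v
    have := (Fintype.equivFin G.V v).isLt
    simp only [key, keyBase, List.foldl_nil]
    omega
  have hge : ∀ (v : G.V) (l : List G.E) (e : G.E), keyBase G ≤ key (v, l ++ [e]) := by
    intro v l e
    rw [hsnoc]
    have := Nat.le_mul_of_pos_left (keyBase G) (key_pos (v, l))
    omega
  induction l using List.reverseRecOn generalizing l' with
  | nil =>
    induction l' using List.reverseRecOn with
    | nil =>
      have : Fintype.equivFin G.V v = Fintype.equivFin G.V v' := by
        apply Fin.ext
        simpa [key] using h
      rw [(Fintype.equivFin G.V).injective this]
    | append_singleton l' e' _ =>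
      have := hbase v
      have := hge v' l' e'
      omega
  | append_singleton l e ih =>
    induction l' using List.reverseRecOn with
    | nil =>
      have := hbase v'
      have := hge v l e
      omega
    | append_singleton l' e' _ =>
      rw [hsnoc, hsnoc] at h
      have hB : 0 < keyBase G := by simp [keyBase]
      have h1 := congrArg (· / keyBase G) h
      have h2 := congrArg (· % keyBase G) h
      simp only [Nat.mul_add_mod_self_right, Nat.mod_eq_of_lt (hdig _)] at h2
      simp only [Nat.mul_comm _ (keyBase G), Nat.mul_add_div hB, Nat.div_eq_of_lt (hdig _),
        add_zero] at h1
      have h3 := ih l' h1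
      rw [(Fintype.equivFin G.E).injective (Fin.ext h2)]
      simp only [Prod.mk.injEq] at h3 ⊢
      exact ⟨h3.1, by rw [h3.2]⟩

end Key

/-! ### Reduction of finite systems of path combinations -/

section Reduce

variable {K : Type} [Field K] {G : FinGraph}

/-- Right multiplication of a formal combination of words by a list of edges. -/
noncomputable def shiftR (l : List G.E) (f : G.V × List G.E →₀ K) : G.V × List G.E →₀ K :=
  f.mapDomain fun w => app w l

theorem ev_shiftR (l : List G.E) (f : G.V × List G.E →₀ K) :
    ev K (shiftR l f) = ev K f * edges K l := by
  rw [ev, shiftR, Finsupp.linearCombination_mapDomain, Finsupp.linearCombination_apply,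
    Finsupp.linearCombination_apply, Finsupp.sum_mul]
  refine Finsupp.sum_congr fun w _ => ?_
  rw [smul_mul_assoc]
  congr 1
  exact (word_mul_edges w.1 w.2 l).symm

theorem shiftR_app (l : List G.E) (f : G.V × List G.E →₀ K) (w : G.V × List G.E) :
    shiftR l f (app w l) = f w :=
  Finsupp.mapDomain_apply (app_injective l) f w

theorem exists_of_shiftR_ne_zero {l : List G.E} {f : G.V × List G.E →₀ K} {w : G.V × List G.E}
    (h : shiftR l f w ≠ 0) : ∃ w' ∈ f.support, w = app w' l := by
  classical
  have := Finsupp.mapDomain_support (Finsupp.mem_support_iff.2 h)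
  obtain ⟨w', hw', rfl⟩ := Finset.mem_image.1 this
  exact ⟨w', hw', rfl⟩

theorem shiftR_mem {l : List G.E} {f : G.V × List G.E →₀ K} {u : G.V}
    (hf : f ∈ Finsupp.supported K K (pathsTo u)) (hl : Valid u l) :
    shiftR l f ∈ Finsupp.supported K K (pathsTo (tgt u l)) := by
  intro w hw
  obtain ⟨w', hw', rfl⟩ := exists_of_shiftR_ne_zero (Finsupp.mem_support_iff.1 hw)
  obtain ⟨h1, h2⟩ := hf hw'
  exact ⟨valid_append.2 ⟨h1, h2.symm ▸ hl⟩, by rw [app, tgt_append, h2]⟩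

theorem ev_mul_vert {f : G.V × List G.E →₀ K} {u : G.V}
    (hf : f ∈ Finsupp.supported K K (pathsTo u)) : ev K f * vert K G u = ev K f := by
  rw [ev, Finsupp.linearCombination_apply, Finsupp.sum_mul]
  refine Finsupp.sum_congr fun w hw => ?_
  obtain ⟨h1, h2⟩ := hf hw
  rw [smul_mul_assoc, ← h2, word_mul_tgt h1]

/-- `w` is the leading word of `f` for the numbering `key`. -/
def IsLead (f : G.V × List G.E →₀ K) (w : G.V × List G.E) : Prop :=
  f w ≠ 0 ∧ ∀ w', f w' ≠ 0 → key w' ≤ key w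

theorem exists_isLead {f : G.V × List G.E →₀ K} (hf : f ≠ 0) : ∃ w, IsLead f w := by
  obtain ⟨w, hw, h⟩ := Finset.exists_max_image f.support key (Finsupp.support_nonempty_iff.2 hf)
  exact ⟨w, Finsupp.mem_support_iff.1 hw, fun v hv => h v (Finsupp.mem_support_iff.2 hv)⟩

/-- A bound for the numbers of the words in `f`, equal to `0` exactly for `f = 0`. -/
noncomputable def deg (f : G.V × List G.E →₀ K) : ℕ := f.support.sup fun w => key w + 1

theorem IsLead.deg_eq {f : G.V × List G.E →₀ K} {w : G.V × List G.E} (h : IsLead f w) :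
    deg f = key w + 1 := by
  refine le_antisymm (Finset.sup_le fun w' hw' => ?_) ?_
  · exact Nat.succ_le_succ (h.2 w' (Finsupp.mem_support_iff.1 hw'))
  · exact Finset.le_sup (f := fun w => key w + 1) (Finsupp.mem_support_iff.2 h.1)

theorem deg_lt {f : G.V × List G.E →₀ K} {m : ℕ} (hm : 0 < m)
    (h : ∀ w, f w ≠ 0 → key w + 1 < m) : deg f < m :=
  (Finset.sup_lt_iff (by simpa using hm)).2 fun w hw => h w (Finsupp.mem_support_iff.1 hw)

/-- Elements `ev (f j)` with prefix-free leading words are right independent over the path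
algebra. -/
theorem indep_pathAlg {ι : Type} [Fintype ι] {u : ι → G.V} {f : ι → (G.V × List G.E →₀ K)}
    (hf : ∀ j, f j ∈ Finsupp.supported K K (pathsTo (u j)))
    {lw : ι → G.V × List G.E} (hlw : ∀ j, IsLead (f j) (lw j))
    (hpf : ∀ i j l, lw j = app (lw i) l → i = j)
    {y : ι → LeavittPathAlgebra K G} (hy : ∀ j, y j ∈ PathAlg K G)
    (h0 : ∑ j, ev K (f j) * (vert K G (u j) * y j) = 0) (j : ι) : vert K G (u j) * y j = 0 := by
  classical
  choose g hg hyg using fun j => exists_lists_eq (hy j) (u j)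
  set F : G.V × List G.E →₀ K :=
    ∑ p ∈ Finset.univ.sigma fun j => (g j).support, g p.1 p.2 • shiftR p.2 (f p.1) with hF
  have hevF : ev K F = 0 := by
    rw [hF, map_sum, Finset.sum_sigma, ← h0]
    refine Finset.sum_congr rfl fun j _ => ?_
    rw [hyg, Finsupp.sum, Finset.mul_sum]
    refine Finset.sum_congr rfl fun l _ => ?_
    rw [map_smul, ev_shiftR, mul_smul_comm, word, ← mul_assoc, ev_mul_vert (hf j)]
  have hFs : F ∈ Finsupp.supported K K (paths G) := by
    refine Submodule.sum_mem _ fun p hp => Submodule.smul_mem _ _ ?_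
    have hv : Valid (u p.1) p.2 := hg p.1 (Finset.mem_sigma.1 hp).2
    exact fun w hw => (shiftR_mem (hf p.1) hv hw).1
  have hF0 := ev_injOn hFs hevF
  by_contra hne
  have hgj : (g j).support.Nonempty := by
    rw [Finsupp.support_nonempty_iff]
    intro h
    rw [hyg, h, Finsupp.sum_zero_index] at hne
    exact hne rfl
  obtain ⟨l₁, hl₁⟩ := hgj
  obtain ⟨⟨j₀, l₀⟩, hp₀, hmax⟩ := Finset.exists_max_image
    (Finset.univ.sigma fun j => (g j).support) (fun p => key (app (lw p.1) p.2))
    ⟨⟨j, l₁⟩, by simpa using hl₁⟩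
  have hval : F (app (lw j₀) l₀) = g j₀ l₀ * f j₀ (lw j₀) := by
    rw [hF, Finsupp.finsetSum_apply, Finset.sum_eq_single ⟨j₀, l₀⟩]
    · rw [Finsupp.smul_apply, shiftR_app, smul_eq_mul]
    · rintro ⟨i, l⟩ hp hne
      rw [Finsupp.smul_apply, smul_eq_mul]
      by_contra hnz
      obtain ⟨w, hw, hwe⟩ := exists_of_shiftR_ne_zero (right_ne_zero_of_mul hnz)
      have hm := hmax ⟨i, l⟩ hp
      simp only at hm hwe
      have hwl : w = lw i := by
        by_contra hc
        have h1 := (hlw i).2 w (Finsupp.mem_support_iff.1 hw)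
        have h2 := lt_of_le_of_ne h1 fun h => hc (key_injective h)
        have h3 := key_app_lt h2 l
        rw [← hwe] at h3
        omega
      subst hwl
      have h4 : (lw j₀).1 = (lw i).1 := (Prod.mk.inj hwe).1
      have h5 : (lw j₀).2 ++ l₀ = (lw i).2 ++ l := (Prod.mk.inj hwe).2
      have h6 : i = j₀ := by
        rcases List.append_eq_append_iff.1 h5 with ⟨k, hk, -⟩ | ⟨k, hk, -⟩
        · exact (hpf j₀ i k (Prod.ext h4.symm hk)).symm
        · exact hpf i j₀ k (Prod.ext h4 hk)
      subst h6
      rw [List.append_right_inj] at h5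
      exact hne (by rw [h5])
    · exact fun h => absurd hp₀ h
  rw [hF0, Finsupp.zero_apply] at hval
  have := (Finset.mem_sigma.1 hp₀).2
  exact mul_ne_zero (Finsupp.mem_support_iff.1 this) (hlw j₀).1 hval.symm

/-- Elements `ev (f j)` with prefix-free leading words are right independent over `L_K(G)`. -/
theorem indep {ι : Type} [Fintype ι] {u : ι → G.V} {f : ι → (G.V × List G.E →₀ K)}
    (hf : ∀ j, f j ∈ Finsupp.supported K K (pathsTo (u j)))
    {lw : ι → G.V × List G.E} (hlw : ∀ j, IsLead (f j) (lw j))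
    (hpf : ∀ i j l, lw j = app (lw i) l → i = j)
    {y : ι → LeavittPathAlgebra K G}
    (h0 : ∑ j, ev K (f j) * (vert K G (u j) * y j) = 0) (j : ι) : vert K G (u j) * y j = 0 := by
  classical
  obtain ⟨κ, _, a, a', -, h1, h2⟩ := exists_common_denom (Finset.univ.image y)
  rw [← mul_one (vert K G (u j) * y j), ← h1, Finset.mul_sum]
  refine Finset.sum_eq_zero fun k _ => ?_
  rw [← mul_assoc, mul_assoc _ (y j), indep_pathAlg hf hlw hpf (y := fun j => y j * a k)
    (fun j => h2 _ (Finset.mem_image_of_mem _ (Finset.mem_univ j)) k) ?_ j, zero_mul]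
  rw [← zero_mul (a k), ← h0, Finset.sum_mul]
  simp only [mul_assoc]

end Reduce

/-! ### Idempotents and sums of vertices -/

/-- Elements `x j`, `z j` of `L_K(G)` that exhibit the right ideal generated by the idempotent `ε`
as isomorphic to the direct sum of the right ideals generated by the vertices `v j`. -/
structure Sys {K : Type} [Field K] {G : FinGraph} (ε : LeavittPathAlgebra K G) {J : Type}
    [Fintype J] [DecidableEq J] (v : J → G.V) (x z : J → LeavittPathAlgebra K G) : Prop where
  mul_eq : ∀ i j, z i * x j = if i = j then vert K G (v i) else 0
  mul_vert : ∀ j, x j * vert K G (v j) = x j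
  vert_mul : ∀ j, vert K G (v j) * z j = z j
  sum_eq : ∑ j, x j * z j = ε

section Idem

variable {K : Type} [Field K] {G : FinGraph}

/-- Systems of generators of the right ideal of `ε`, given by path combinations. -/
def Gens (ε : LeavittPathAlgebra K G) {ι : Type} [Fintype ι] (u : ι → G.V)
    (f : ι → (G.V × List G.E →₀ K)) : Prop :=
  (∀ i, f i ∈ Finsupp.supported K K (pathsTo (u i))) ∧ (∀ i, ε * ev K (f i) = ev K (f i)) ∧
    ∃ c : ι → LeavittPathAlgebra K G, ∑ i, ev K (f i) * c i = ε

theorem exists_gens {ε : LeavittPathAlgebra K G} (hε : IsIdempotentElem ε) :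
    ∃ (ι : Type) (_ : Fintype ι) (_ : DecidableEq ι) (u : ι → G.V)
      (f : ι → (G.V × List G.E →₀ K)), Gens ε u f := by
  classical
  obtain ⟨ι, _, a, a', -, h1, h2⟩ := hasDenom ε
  choose f hf hfe using fun p : ι × G.V => exists_ev_eq (h2 p.1) p.2
  refine ⟨ι × G.V, inferInstance, inferInstance, Prod.snd, f, hf, fun p => ?_,
    fun p => vert K G p.2 * a' p.1, ?_⟩
  · rw [hfe, ← mul_assoc, ← mul_assoc, hε.eq]
  · rw [Fintype.sum_prod_type]
    calc ∑ i, ∑ v, ev K (f (i, v)) * (vert K G v * a' i)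
        = ∑ i, ∑ v, ε * a i * vert K G v * a' i := by
          refine Finset.sum_congr rfl fun i _ => Finset.sum_congr rfl fun v _ => ?_
          rw [hfe, ← mul_assoc, mul_assoc (ε * a i), vert_mul_self]
      _ = ∑ i, ε * (a i * a' i) := by
          refine Finset.sum_congr rfl fun i _ => ?_
          rw [← Finset.sum_mul, ← Finset.mul_sum, ← one_eq_sum, mul_one, mul_assoc]
      _ = ε := by rw [← Finset.mul_sum, h1, mul_one]

/-- If the leading word of one generator is a prefix of the leading word of another, the second one
can be replaced by a combination of smaller degree. -/
theorem Gens.reduce {ε : LeavittPathAlgebra K G} {ι : Type} [Fintype ι] [DecidableEq ι]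
    {u : ι → G.V} {f : ι → (G.V × List G.E →₀ K)} (h : Gens ε u f) {i j : ι} (hij : i ≠ j)
    {w w' : G.V × List G.E} (hw : IsLead (f i) w) (hw' : IsLead (f j) w') {l : List G.E}
    (hl : w' = app w l) :
    ∃ f', Gens ε u f' ∧ ∑ k, deg (f' k) < ∑ k, deg (f k) := by
  obtain ⟨h1, h2, c, hc⟩ := h
  have hmi := h1 i (Finsupp.mem_support_iff.2 hw.1)
  have hmj := h1 j (Finsupp.mem_support_iff.2 hw'.1)
  subst hl
  have hv : Valid (u i) l := by
    rw [← hmi.2]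
    exact (valid_append.1 hmj.1).2
  have ht : tgt (u i) l = u j := by
    rw [← hmi.2, ← hmj.2, app, tgt_append]
  set t : K := f j (app w l) / f i w with ht'
  set fj : G.V × List G.E →₀ K := f j - t • shiftR l (f i) with hfj
  have hev : ev K fj = ev K (f j) - t • (ev K (f i) * edges K l) := by
    rw [hfj, map_sub, map_smul, ev_shiftR]
  refine ⟨Function.update f j fj, ⟨fun k => ?_, fun k => ?_,
    Function.update c i (c i + t • (edges K l * c j)), ?_⟩, ?_⟩
  · by_cases hk : k = j
    · subst hk
      rw [Function.update_self]
      refine sub_mem (h1 k) (Submodule.smul_mem _ _ ?_)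
      rw [← ht]
      exact shiftR_mem (h1 i) hv
    · rw [Function.update_of_ne hk]; exact h1 k
  · by_cases hk : k = j
    · subst hk
      rw [Function.update_self, hev, mul_sub, h2, mul_smul_comm, ← mul_assoc, h2]
    · rw [Function.update_of_ne hk]; exact h2 k
  · rw [← hc]
    rw [← Finset.add_sum_erase _ _ (Finset.mem_univ j),
      ← Finset.add_sum_erase _ _ (Finset.mem_erase.2 ⟨hij, Finset.mem_univ i⟩),
      ← Finset.add_sum_erase (a := j) _ _ (Finset.mem_univ j),
      ← Finset.add_sum_erase _ _ (Finset.mem_erase.2 ⟨hij, Finset.mem_univ i⟩)]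
    have hrest : ∑ k ∈ (Finset.univ.erase j).erase i, ev K (Function.update f j fj k) *
        Function.update c i (c i + t • (edges K l * c j)) k =
        ∑ k ∈ (Finset.univ.erase j).erase i, ev K (f k) * c k := by
      refine Finset.sum_congr rfl fun k hk => ?_
      simp only [Finset.mem_erase] at hk
      rw [Function.update_of_ne hk.2.1, Function.update_of_ne hk.1]
    rw [hrest, Function.update_self, Function.update_self, Function.update_of_ne hij,
      Function.update_of_ne hij.symm, hev, sub_mul, mul_add, smul_mul_assoc, mul_smul_comm,
      mul_assoc]
    abel
  · have hdeg : deg fj < deg (f j) := by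
      rw [hw'.deg_eq]
      refine deg_lt (Nat.succ_pos _) fun v hv => Nat.succ_lt_succ ?_
      have hzero : fj (app w l) = 0 := by
        rw [hfj, Finsupp.sub_apply, Finsupp.smul_apply, shiftR_app, ht', smul_eq_mul,
          div_mul_cancel₀ _ hw.1, sub_self]
      refine lt_of_le_of_ne ?_ fun h => hv (by rw [key_injective h, hzero])
      by_cases hfv : f j v = 0
      · have hs : shiftR l (f i) v ≠ 0 := by
          intro hs
          rw [hfj, Finsupp.sub_apply, Finsupp.smul_apply, hs, hfv] at hv
          simp at hv
        obtain ⟨v', hv', rfl⟩ := exists_of_shiftR_ne_zero hs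
        rcases (hw.2 v' (Finsupp.mem_support_iff.1 hv')).lt_or_eq with h | h
        · exact (key_app_lt h l).le
        · rw [key_injective h]
      · exact hw'.2 v hfv
    refine Finset.sum_lt_sum (fun k _ => ?_) ⟨j, Finset.mem_univ j, ?_⟩
    · by_cases hk : k = j
      · subst hk
        rw [Function.update_self]
        exact hdeg.le
      · rw [Function.update_of_ne hk]
    · rwa [Function.update_self]

/-- The right ideal generated by an idempotent of `L_K(G)` is a finite direct sum of right ideals
generated by vertices: a system of generators of minimal total degree has prefix-free leading words
and is therefore independent. -/
theorem exists_sys {ε : LeavittPathAlgebra K G} (hε : IsIdempotentElem ε) :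
    ∃ (J : Type) (_ : Fintype J) (_ : DecidableEq J) (v : J → G.V)
      (x z : J → LeavittPathAlgebra K G), Sys ε v x z := by
  classical
  obtain ⟨ι, _, _, u, f₀, hf₀⟩ := exists_gens hε
  obtain ⟨f, hf, hmin⟩ := (measure fun f : ι → (G.V × List G.E →₀ K) => ∑ k, deg (f k)).wf.has_min
    {f | Gens ε u f} ⟨f₀, hf₀⟩
  obtain ⟨h1, h2, c, hc⟩ := id hf
  choose lw hlw using fun j : {j // f j ≠ 0} => exists_isLead j.2
  have hpf : ∀ (i j : {j // f j ≠ 0}) (l : List G.E), lw j = app (lw i) l → i = j := by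
    intro i j l hl
    by_contra hij
    obtain ⟨f', hf', hlt⟩ := Gens.reduce hf (fun h => hij (Subtype.ext h)) (hlw i) (hlw j) hl
    exact hmin f' hf' hlt
  have hind := fun (y : {j // f j ≠ 0} → LeavittPathAlgebra K G) h =>
    indep (u := fun j : {j // f j ≠ 0} => u j) (f := fun j => f j) (fun j => h1 j) hlw hpf
      (y := y) h
  have hsum : ∑ j : {j // f j ≠ 0}, ev K (f j) * (vert K G (u j) * c j) = ε := by
    rw [← hc]
    have h3 : ∀ j, ev K (f j) * (vert K G (u j) * c j) = ev K (f j) * c j := fun j => by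
      rw [← mul_assoc, ev_mul_vert (h1 j)]
    simp only [h3]
    rw [← Finset.sum_subtype (Finset.univ.filter (f · ≠ 0)) (by simp)
      (fun j => ev K (f j) * c j), Finset.sum_filter_of_ne]
    intro j _ hj h0
    rw [h0, map_zero, zero_mul] at hj
    exact hj rfl
  refine ⟨{j // f j ≠ 0}, inferInstance, inferInstance, fun j => u j, fun j => ev K (f j),
    fun j => vert K G (u j) * c j, fun i j => ?_, fun j => ev_mul_vert (h1 j),
    fun j => by rw [← mul_assoc, vert_mul_self], hsum⟩
  have h4 := hind (fun i => c i * ev K (f j) - if i = j then 1 else 0) ?_ i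
  · rw [mul_sub, sub_eq_zero, ← mul_assoc] at h4
    rw [h4]
    split_ifs <;> simp
  · simp only [mul_sub, Finset.sum_sub_distrib]
    have h5 : ∀ x : {j // f j ≠ 0}, ev K (f x) * (vert K G (u x) * (c x * ev K (f j))) =
        ev K (f x) * (vert K G (u x) * c x) * ev K (f j) := fun x => by simp only [mul_assoc]
    simp only [h5]
    rw [← Finset.sum_mul, hsum, h2, Finset.sum_eq_single j]
    · simp [ev_mul_vert (h1 j)]
    · intro b _ hb
      simp [hb]
    · simp

end Idem

/-! ### Refinement of systems of vertices -/

section SysLemmas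

variable {K : Type} [Field K] {G : FinGraph}

theorem Sys.idem_mul {ε : LeavittPathAlgebra K G} {J : Type} [Fintype J] [DecidableEq J]
    {v : J → G.V} {x z : J → LeavittPathAlgebra K G} (h : Sys ε v x z) (j : J) :
    ε * x j = x j := by
  rw [← h.sum_eq, Finset.sum_mul, Finset.sum_eq_single j]
  · rw [mul_assoc, h.mul_eq, if_pos rfl, h.mul_vert]
  · intro i _ hi
    rw [mul_assoc, h.mul_eq, if_neg hi, mul_zero]
  · simp

theorem Sys.mul_idem {ε : LeavittPathAlgebra K G} {J : Type} [Fintype J] [DecidableEq J]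
    {v : J → G.V} {x z : J → LeavittPathAlgebra K G} (h : Sys ε v x z) (j : J) :
    z j * ε = z j := by
  rw [← h.sum_eq, Finset.mul_sum, Finset.sum_eq_single j]
  · rw [← mul_assoc, h.mul_eq, if_pos rfl, h.vert_mul]
  · intro i _ hi
    rw [← mul_assoc, h.mul_eq, if_neg hi.symm, zero_mul]
  · simp

/-- A system can be refined by replacing each of its vertices by a system for that vertex. -/
theorem Sys.sigma {ε : LeavittPathAlgebra K G} {J : Type} [Fintype J] [DecidableEq J]
    {v : J → G.V} {x z : J → LeavittPathAlgebra K G} (h : Sys ε v x z)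
    {Q : J → Type} [∀ j, Fintype (Q j)] [∀ j, DecidableEq (Q j)] {t : ∀ j, Q j → G.V}
    {p p' : ∀ j, Q j → LeavittPathAlgebra K G}
    (hq : ∀ j, Sys (vert K G (v j)) (t j) (p j) (p' j)) :
    Sys (J := Σ j, Q j) ε (fun q => t q.1 q.2) (fun q => x q.1 * p q.1 q.2)
      (fun q => p' q.1 q.2 * z q.1) where
  mul_eq := by
    rintro ⟨i, a⟩ ⟨j, b⟩
    dsimp only
    rw [mul_assoc, ← mul_assoc (z i), h.mul_eq]
    by_cases hij : i = j
    · subst hij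
      rw [if_pos rfl, (hq i).idem_mul, (hq i).mul_eq]
      by_cases hab : a = b
      · rw [if_pos hab, if_pos (by rw [hab])]
      · rw [if_neg hab, if_neg fun h => hab (by simpa using h)]
    · rw [if_neg hij, zero_mul, mul_zero, if_neg fun h => hij (congrArg Sigma.fst h)]
  mul_vert q := by rw [mul_assoc, (hq _).mul_vert]
  vert_mul q := by rw [← mul_assoc, (hq _).vert_mul]
  sum_eq := by
    rw [Fintype.sum_sigma, ← h.sum_eq]
    refine Finset.sum_congr rfl fun j _ => ?_
    calc ∑ a, x j * p j a * (p' j a * z j) = ∑ a, x j * (p j a * p' j a) * z j := by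
          simp only [mul_assoc]
      _ = x j * z j := by
          rw [← Finset.sum_mul, ← Finset.mul_sum, (hq j).sum_eq, h.mul_vert]

theorem Sys.reindex {ε : LeavittPathAlgebra K G} {J J' : Type} [Fintype J] [DecidableEq J]
    [Fintype J'] [DecidableEq J']
    {v : J → G.V} {x z : J → LeavittPathAlgebra K G} (h : Sys ε v x z) (σ : J' ≃ J) :
    Sys ε (v ∘ σ) (x ∘ σ) (z ∘ σ) where
  mul_eq i j := by
    simp only [Function.comp_apply, h.mul_eq, σ.injective.eq_iff]
  mul_vert j := h.mul_vert _
  vert_mul j := h.vert_mul _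
  sum_eq := by
    rw [← h.sum_eq]
    exact Equiv.sum_comp σ fun j => x j * z j

theorem sys_vert (u : G.V) : Sys (J := Unit) (vert K G u) (fun _ => u) (fun _ => vert K G u)
    (fun _ => vert K G u) where
  mul_eq _ _ := by simp
  mul_vert _ := by simp
  vert_mul _ := by simp
  sum_eq := by simp

/-- The Cuntz–Krieger relation at `u` as a system for the vertex `u`. -/
theorem sys_expand (u : G.V) (hu : G.IsRegular u) : Sys (J := {e : G.E // G.s e = u})
    (vert K G u) (fun e => G.r e.1) (fun e => edge K G e.1) (fun e => ghost K G e.1) where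
  mul_eq e f := by simp only [ghost_mul_edge, Subtype.ext_iff]
  mul_vert _ := by simp
  vert_mul _ := by simp
  sum_eq := by
    rw [vert_eq_sum u hu]
    exact (Finset.sum_subtype _ (by simp) fun e => edge K G e * ghost K G e).symm

end SysLemmas

section HairSys

variable {K : Type} [Field K] {F : FinGraph} {n : F.V → ℕ}

/-- The vertex of `F` to which a vertex of a hair extension of `F` is attached. -/
def base : (F.hairExtension n).V → F.V := Sum.elim id Sigma.fst

/-- The vertices of `F` as vertices of a hair extension. -/
abbrev vF (u : F.V) : (F.hairExtension n).V := Sum.inl u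

/-- The hair vertices of a hair extension. -/
abbrev vHair (p : Σ v : F.V, Fin (n v - 1)) : (F.hairExtension n).V := Sum.inr p

/-- The distance of a vertex of a hair extension of `F` from `F`. -/
def level : (F.hairExtension n).V → ℕ := Sum.elim (fun _ => 0) fun p => p.2 + 1

theorem base_range_hair (p : Σ v : F.V, Fin (n v - 1)) :
    base ((F.hairExtension n).r (Sum.inr p)) = p.1 := by
  simp only [FinGraph.hairExtension, Sum.elim_inr]
  split_ifs <;> rfl

theorem level_range_hair (p : Σ v : F.V, Fin (n v - 1)) :
    level ((F.hairExtension n).r (Sum.inr p)) = p.2 := by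
  simp only [FinGraph.hairExtension, Sum.elim_inr]
  split_ifs with h
  · exact h.symm
  · simp only [level, Sum.elim_inr]
    omega

theorem eq_of_s_eq_inr {e : (F.hairExtension n).E} {p : Σ v : F.V, Fin (n v - 1)}
    (h : (F.hairExtension n).s e = vHair p) : e = Sum.inr p := by
  rcases e with e | q
  · simp [FinGraph.hairExtension] at h
  · simpa [FinGraph.hairExtension] using h

theorem exists_of_s_eq_inl {e : (F.hairExtension n).E} {u : F.V}
    (h : (F.hairExtension n).s e = vF u) : ∃ f, e = Sum.inl f ∧ F.s f = u := by
  rcases e with e | q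
  · exact ⟨e, rfl, by simpa [FinGraph.hairExtension] using h⟩
  · simp [FinGraph.hairExtension] at h

/-- A system for `ε` whose vertices are the vertices `v j` of `F`. -/
def SysOn (ε : LeavittPathAlgebra K (F.hairExtension n)) (J : Type) [Fintype J] [DecidableEq J]
    (v : J → F.V) : Prop := ∃ x z, Sys ε (fun j => (vF (v j) : (F.hairExtension n).V)) x z

theorem SysOn.sigma {ε : LeavittPathAlgebra K (F.hairExtension n)} {J : Type} [Fintype J]
    [DecidableEq J] {v : J → (F.hairExtension n).V}
    {x z : J → LeavittPathAlgebra K (F.hairExtension n)} (h : Sys ε v x z)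
    {Q : J → Type} [∀ j, Fintype (Q j)] [∀ j, DecidableEq (Q j)] {t : ∀ j, Q j → F.V}
    (hq : ∀ j, SysOn (vert K _ (v j)) (Q j) (t j)) :
    SysOn ε (Σ j, Q j) fun q => t q.1 q.2 := by
  choose p p' hp using hq
  exact ⟨_, _, h.sigma hp⟩

theorem exists_sysOn_vert (w : (F.hairExtension n).V) :
    ∃ (J : Type) (_ : Fintype J) (_ : DecidableEq J) (v : J → F.V),
      SysOn (vert K (F.hairExtension n) w) J v := by
  induction hk : level w generalizing w with
  | zero =>
    rcases w with u | p
    · exact ⟨Unit, inferInstance, inferInstance, fun _ => u, _, _, sys_vert _⟩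
    · simp [level] at hk
  | succ k ih =>
    rcases w with u | p
    · simp [level] at hk
    · have hlev : ∀ e : {e // (F.hairExtension n).s e = vHair p},
          level ((F.hairExtension n).r e.1) = k := by
        rintro ⟨e, he⟩
        dsimp only
        rw [eq_of_s_eq_inr he, level_range_hair]
        simpa [level] using hk
      choose J hJ hJ' v hv using fun e : {e // (F.hairExtension n).s e = vHair p} =>
        ih _ (hlev e)
      exact ⟨_, inferInstance, inferInstance, _,
        SysOn.sigma (sys_expand (vHair p) ⟨Sum.inr p, rfl⟩) hv⟩

/-- A vertex `u` of a totally looped graph has a system that involves `u` and all the ranges of the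
edges emitted by `u`. -/
theorem exists_sysOn_expand (hF : F.TotallyLooped) (u : F.V) :
    ∃ (J : Type) (_ : Fintype J) (_ : DecidableEq J) (v : J → F.V),
      SysOn (vert K (F.hairExtension n) (vF u)) J v ∧ (∃ j, v j = u) ∧
        ∀ e, F.s e = u → ∃ j, v j = F.r e := by
  by_cases hu : F.IsRegular u
  · obtain ⟨e₀, he₀, hr₀⟩ := hF u hu
    choose f hf hf' using fun e : {e // (F.hairExtension n).s e = vF u} =>
      exists_of_s_eq_inl e.2
    have hr : (fun e : {e // (F.hairExtension n).s e = vF u} => (F.hairExtension n).r e.1) =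
        fun e => vF (F.r (f e)) := by
      funext e
      rw [hf e]
      rfl
    have hmain : ∀ e, F.s e = u →
        ∃ j : {e // (F.hairExtension n).s e = vF u}, F.r (f j) = F.r e := by
      intro e he
      have hs : (F.hairExtension n).s (Sum.inl e) = vF u := by rw [← he]; rfl
      refine ⟨⟨Sum.inl e, hs⟩, ?_⟩
      have := hf ⟨Sum.inl e, hs⟩
      rw [← Sum.inl.inj this]
    refine ⟨{e // (F.hairExtension n).s e = vF u}, inferInstance, inferInstance,
      fun e => F.r (f e), ⟨_, _, hr ▸ sys_expand (K := K) (G := F.hairExtension n) (vF u)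
        ⟨Sum.inl e₀, by rw [← he₀]; rfl⟩⟩, ?_, hmain⟩
    obtain ⟨j, hj⟩ := hmain e₀ he₀
    exact ⟨j, hj.trans hr₀⟩
  · exact ⟨Unit, inferInstance, inferInstance, fun _ => u, ⟨_, _, sys_vert _⟩, ⟨(), rfl⟩,
      fun e he => absurd ⟨e, he⟩ hu⟩

/-- An idempotent of `L_K(F⁺(n))` has a system whose vertices form a hereditary set in `F`, namely
a system for which the set of these vertices is maximal. -/
theorem exists_hereditary_sysOn (hF : F.TotallyLooped)
    {ε : LeavittPathAlgebra K (F.hairExtension n)} (hε : IsIdempotentElem ε) :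
    ∃ (J : Type) (_ : Fintype J) (_ : DecidableEq J) (v : J → F.V),
      SysOn ε J v ∧ F.Hereditary (Finset.univ.image v) := by
  classical
  let S : Set (Finset F.V) := {T | ∃ (J : Type) (_ : Fintype J) (_ : DecidableEq J) (v : J → F.V),
      SysOn ε J v ∧ Finset.univ.image v = T}
  have hS : S.Nonempty := by
    obtain ⟨J, _, _, w, x, z, h⟩ := exists_sys hε
    choose Q hQ hQ' v hv using fun j => exists_sysOn_vert (K := K) (w j)
    exact ⟨_, _, inferInstance, inferInstance, _, SysOn.sigma h hv, rfl⟩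
  obtain ⟨T, hT⟩ := Set.Finite.exists_maximal (Set.toFinite S) hS
  obtain ⟨J, _, _, v, ⟨x, z, hv⟩, hvT⟩ := hT.prop
  refine ⟨J, _, _, v, ⟨x, z, hv⟩, ?_⟩
  choose Q hQ hQ' t ht ht1 ht2 using fun j => exists_sysOn_expand (K := K) (n := n) hF (v j)
  have hnew : Finset.univ.image (fun q : Σ j, Q j => t q.1 q.2) ∈ S :=
    ⟨_, inferInstance, inferInstance, _, SysOn.sigma hv ht, rfl⟩
  have hle : T ≤ Finset.univ.image (fun q : Σ j, Q j => t q.1 q.2) := by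
    intro u hu
    rw [← hvT] at hu
    obtain ⟨j, -, rfl⟩ := Finset.mem_image.1 hu
    obtain ⟨q, hq⟩ := ht1 j
    exact Finset.mem_image.2 ⟨⟨j, q⟩, Finset.mem_univ _, hq⟩
  intro e he
  obtain ⟨j, -, hj⟩ := Finset.mem_image.1 he
  obtain ⟨q, hq⟩ := ht2 j e hj.symm
  rw [hvT]
  exact hT.le_of_ge hnew hle (Finset.mem_image.2 ⟨⟨j, q⟩, Finset.mem_univ _, hq⟩)

end HairSys

/-! ### Corners given by systems on a hereditary subgraph -/

/-- An embedding of a graph `H` onto the restriction of `E` to a hereditary set of vertices. -/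
structure HerEmb (H E : FinGraph) where
  toV : H.V → E.V
  toE : H.E → E.E
  injV : Function.Injective toV
  injE : Function.Injective toE
  s_toE : ∀ e, E.s (toE e) = toV (H.s e)
  r_toE : ∀ e, E.r (toE e) = toV (H.r e)
  full : ∀ (f : E.E) (u : H.V), E.s f = toV u → ∃ e, toE e = f

section Corner

variable {K : Type} [Field K] {H E : FinGraph} (ι : HerEmb H E) {m : H.V → ℕ}

variable (K) in
/-- The element of `L_K(E)` by which an edge of the hair extension acts; hair edges act by
vertices. -/
def lab : (H.hairExtension m).E → LeavittPathAlgebra K E :=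
  Sum.elim (fun e => edge K E (ι.toE e)) fun p => vert K E (ι.toV p.1)

variable (K) in
/-- The element of `L_K(E)` by which a ghost edge of the hair extension acts. -/
def lab' : (H.hairExtension m).E → LeavittPathAlgebra K E :=
  Sum.elim (fun e => ghost K E (ι.toE e)) fun p => vert K E (ι.toV p.1)

/-- The vertex of `E` under a vertex of the hair extension. -/
def bot (g : (H.hairExtension m).V) : E.V := ι.toV (base g)

/-- An edge of `H` as an edge of the hair extension. -/
def eF (e : H.E) : (H.hairExtension m).E := Sum.inl e

/-- A hair edge of the hair extension. -/
def eHair (p : Σ v : H.V, Fin (m v - 1)) : (H.hairExtension m).E := Sum.inr p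

theorem edge_cases (e : (H.hairExtension m).E) : (∃ f, e = eF f) ∨ ∃ p, e = eHair p := by
  rcases e with e | p
  · exact Or.inl ⟨e, rfl⟩
  · exact Or.inr ⟨p, rfl⟩

theorem vert_cases (g : (H.hairExtension m).V) : (∃ u, g = vF u) ∨ ∃ p, g = vHair p := by
  rcases g with u | p
  · exact Or.inl ⟨u, rfl⟩
  · exact Or.inr ⟨p, rfl⟩

theorem s_eF (e : H.E) : (H.hairExtension m).s (eF e) = vF (H.s e) := rfl

theorem r_eF (e : H.E) : (H.hairExtension m).r (eF e) = vF (H.r e) := rfl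

theorem s_eHair (p : Σ v : H.V, Fin (m v - 1)) : (H.hairExtension m).s (eHair p) = vHair p := rfl

theorem eF_inj {e f : H.E} (h : (eF e : (H.hairExtension m).E) = eF f) : e = f := Sum.inl.inj h

theorem vF_inj {u v : H.V} (h : (vF u : (H.hairExtension m).V) = vF v) : u = v := Sum.inl.inj h

theorem vF_ne_vHair (u : H.V) (p : Σ v : H.V, Fin (m v - 1)) :
    (vF u : (H.hairExtension m).V) ≠ vHair p := fun h => by cases h

theorem lab_eF (e : H.E) : lab K ι (eF e : (H.hairExtension m).E) = edge K E (ι.toE e) := rfl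

theorem lab'_eF (e : H.E) : lab' K ι (eF e : (H.hairExtension m).E) = ghost K E (ι.toE e) := rfl

theorem lab_eHair (p : Σ v : H.V, Fin (m v - 1)) :
    lab K ι (eHair p) = vert K E (ι.toV p.1) := rfl

theorem lab'_eHair (p : Σ v : H.V, Fin (m v - 1)) :
    lab' K ι (eHair p) = vert K E (ι.toV p.1) := rfl

theorem bot_vF (u : H.V) : bot ι (vF u : (H.hairExtension m).V) = ι.toV u := rfl

theorem bot_vHair (p : Σ v : H.V, Fin (m v - 1)) : bot ι (vHair p) = ι.toV p.1 := rfl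

theorem bot_range_eHair (p : Σ v : H.V, Fin (m v - 1)) :
    bot ι ((H.hairExtension m).r (eHair p)) = ι.toV p.1 :=
  congrArg ι.toV (base_range_hair p)

theorem bot_range_eF (e : H.E) :
    bot ι ((H.hairExtension m).r (eF e)) = E.r (ι.toE e) := (ι.r_toE e).symm

theorem bot_source_eF (e : H.E) :
    bot ι ((H.hairExtension m).s (eF e)) = E.s (ι.toE e) := (ι.s_toE e).symm

theorem lab_mul_range (e : (H.hairExtension m).E) :
    lab K ι e * vert K E (bot ι ((H.hairExtension m).r e)) = lab K ι e := by
  obtain ⟨e, rfl⟩ | ⟨p, rfl⟩ := edge_cases e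
  · rw [bot_range_eF]; exact edge_mul_range _
  · rw [bot_range_eHair]; exact vert_mul_self _

theorem range_mul_lab' (e : (H.hairExtension m).E) :
    vert K E (bot ι ((H.hairExtension m).r e)) * lab' K ι e = lab' K ι e := by
  obtain ⟨e, rfl⟩ | ⟨p, rfl⟩ := edge_cases e
  · rw [bot_range_eF]; exact range_mul_ghost _
  · rw [bot_range_eHair]; exact vert_mul_self _

theorem source_mul_lab (e : (H.hairExtension m).E) :
    vert K E (bot ι ((H.hairExtension m).s e)) * lab K ι e = lab K ι e := by
  obtain ⟨e, rfl⟩ | ⟨p, rfl⟩ := edge_cases e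
  · rw [bot_source_eF]; exact source_mul_edge _
  · exact vert_mul_self _

theorem lab'_mul_lab {e f : (H.hairExtension m).E}
    (h : (H.hairExtension m).s e = (H.hairExtension m).s f) :
    lab' K ι e * lab K ι f = if e = f then vert K E (bot ι ((H.hairExtension m).r e)) else 0 := by
  obtain ⟨e, rfl⟩ | ⟨p, rfl⟩ := edge_cases e <;> obtain ⟨f, rfl⟩ | ⟨q, rfl⟩ := edge_cases f
  · rw [bot_range_eF]
    refine (ghost_mul_edge _ _).trans ?_
    by_cases hef : e = f
    · rw [hef, if_pos rfl, if_pos rfl]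
    · rw [if_neg fun h => hef (ι.injE h), if_neg fun h => hef (eF_inj h)]
  · cases h
  · cases h
  · have hpq : p = q := Sum.inr.inj h
    subst hpq
    rw [if_pos rfl, bot_range_eHair]
    exact vert_mul_self _

theorem sum_lab_mul_lab' (g : (H.hairExtension m).V) (hg : (H.hairExtension m).IsRegular g) :
    ∑ e ∈ Finset.univ.filter (fun e => (H.hairExtension m).s e = g), lab K ι e * lab' K ι e =
      vert K E (bot ι g) := by
  obtain ⟨u, rfl⟩ | ⟨p, rfl⟩ := vert_cases g
  · obtain ⟨e₀, he₀⟩ := hg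
    obtain ⟨e₁, -, he₁⟩ := exists_of_s_eq_inl he₀
    rw [bot_vF, vert_eq_sum (ι.toV u) ⟨ι.toE e₁, by rw [ι.s_toE, he₁]⟩]
    symm
    have hex : ∀ f ∈ Finset.univ.filter (fun f : E.E => E.s f = ι.toV u),
        ∃ e, ι.toE e = f := fun f hf => ι.full f u (Finset.mem_filter.1 hf).2
    refine Finset.sum_bij (fun f hf => eF (hex f hf).choose) ?_ ?_ ?_ ?_
    · intro f hf
      have h1 := (hex f hf).choose_spec
      have h2 := (Finset.mem_filter.1 hf).2
      rw [← h1, ι.s_toE] at h2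
      exact Finset.mem_filter.2 ⟨Finset.mem_univ _, congrArg Sum.inl (ι.injV h2)⟩
    · intro f hf f' hf' h
      rw [← (hex f hf).choose_spec, ← (hex f' hf').choose_spec, eF_inj h]
    · intro e he
      obtain ⟨e', rfl, he'⟩ := exists_of_s_eq_inl (Finset.mem_filter.1 he).2
      have hf : ι.toE e' ∈ Finset.univ.filter (fun f : E.E => E.s f = ι.toV u) := by
        rw [Finset.mem_filter, ι.s_toE, he']
        exact ⟨Finset.mem_univ _, rfl⟩
      exact ⟨ι.toE e', hf, congrArg Sum.inl (ι.injE (hex _ hf).choose_spec)⟩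
    · intro f hf
      rw [lab_eF, lab'_eF, (hex f hf).choose_spec]
  · rw [Finset.sum_eq_single (eHair p)]
    · exact vert_mul_self _
    · intro e he hne
      exact absurd (eq_of_s_eq_inr (Finset.mem_filter.1 he).2) hne
    · intro h
      exact (h (Finset.mem_filter.2 ⟨Finset.mem_univ _, s_eHair p⟩)).elim

variable {ι}
variable {ε : LeavittPathAlgebra K E} {x z : (H.hairExtension m).V → LeavittPathAlgebra K E}

theorem Sys.preFamily (h : Sys ε (bot ι) x z) :
    PreFamily (H.hairExtension m) (fun g => x g * z g)
      (fun e => x ((H.hairExtension m).s e) * lab K ι e * z ((H.hairExtension m).r e))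
      (fun e => x ((H.hairExtension m).r e) * lab' K ι e * z ((H.hairExtension m).s e)) where
  vertMul g g' := by
    rw [mul_assoc, ← mul_assoc (z g), h.mul_eq]
    split_ifs with hg
    · rw [← hg, h.vert_mul]
    · rw [zero_mul, mul_zero]
  edgeLeft e := by
    rw [mul_assoc, ← mul_assoc (z _), ← mul_assoc (z _), h.mul_eq, if_pos rfl, source_mul_lab,
      mul_assoc]
  edgeRight e := by
    rw [mul_assoc, ← mul_assoc (z _), h.mul_eq, if_pos rfl, h.vert_mul]
  ghostLeft e := by
    rw [mul_assoc, ← mul_assoc (z _), ← mul_assoc (z _), h.mul_eq, if_pos rfl, range_mul_lab',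
      mul_assoc]
  ghostRight e := by
    rw [mul_assoc, ← mul_assoc (z _), h.mul_eq, if_pos rfl, h.vert_mul]
  ghostEdge e f := by
    have h1 : x ((H.hairExtension m).r e) * lab' K ι e * z ((H.hairExtension m).s e) *
        (x ((H.hairExtension m).s f) * lab K ι f * z ((H.hairExtension m).r f)) =
        x ((H.hairExtension m).r e) * (lab' K ι e *
          ((z ((H.hairExtension m).s e) * x ((H.hairExtension m).s f)) * lab K ι f)) *
            z ((H.hairExtension m).r f) := by
      simp only [mul_assoc]
    rw [h1, h.mul_eq]
    by_cases hs : (H.hairExtension m).s e = (H.hairExtension m).s f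
    · rw [if_pos hs, hs, source_mul_lab, lab'_mul_lab ι hs]
      split_ifs with hef
      · subst hef
        rw [h.mul_vert]
      · rw [mul_zero, zero_mul]
    · rw [if_neg hs, zero_mul, mul_zero, mul_zero, zero_mul, if_neg fun h => hs (by rw [h])]
  cuntzKrieger g hg := by
    rw [← h.mul_vert g, ← sum_lab_mul_lab' (K := K) ι g hg, Finset.mul_sum, Finset.sum_mul]
    refine Finset.sum_congr rfl fun e he => ?_
    have hs : (H.hairExtension m).s e = g := (Finset.mem_filter.1 he).2
    have h1 : x ((H.hairExtension m).s e) * lab K ι e * z ((H.hairExtension m).r e) *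
        (x ((H.hairExtension m).r e) * lab' K ι e * z ((H.hairExtension m).s e)) =
        x ((H.hairExtension m).s e) * (lab K ι e *
          (z ((H.hairExtension m).r e) * x ((H.hairExtension m).r e)) * lab' K ι e) *
            z ((H.hairExtension m).s e) := by
      simp only [mul_assoc]
    rw [h1, h.mul_eq, if_pos rfl, lab_mul_range, hs]

/-- The path of `E` under a path of the hair extension. -/
def filt (ι : HerEmb H E) (l : List (H.hairExtension m).E) : List E.E :=
  (l.filterMap Sum.getLeft?).map ι.toE

theorem filt_eF (e : H.E) (l : List (H.hairExtension m).E) :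
    filt ι (eF e :: l) = ι.toE e :: filt ι l := rfl

theorem filt_eHair (p : Σ v : H.V, Fin (m v - 1)) (l : List (H.hairExtension m).E) :
    filt ι (eHair p :: l) = filt ι l := rfl

theorem lab_mul_word (e : (H.hairExtension m).E) (l : List (H.hairExtension m).E) :
    lab K ι e * word K (bot ι ((H.hairExtension m).r e), filt ι l) =
      word K (bot ι ((H.hairExtension m).s e), filt ι (e :: l)) := by
  obtain ⟨e, rfl⟩ | ⟨p, rfl⟩ := edge_cases e
  · rw [filt_eF, bot_range_eF, word_cons _ (bot_source_eF ι e).symm]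
    rfl
  · rw [filt_eHair, bot_range_eHair]
    exact vert_mul_word _ _

theorem valid_filt {g : (H.hairExtension m).V} {l : List (H.hairExtension m).E}
    (hl : Valid g l) : Valid (bot ι g) (filt ι l) := by
  induction l generalizing g with
  | nil => trivial
  | cons e l ih =>
    obtain ⟨rfl, h2⟩ := hl
    have h3 := ih h2
    obtain ⟨e, rfl⟩ | ⟨p, rfl⟩ := edge_cases e
    · rw [filt_eF]
      rw [bot_range_eF] at h3
      exact ⟨ι.s_toE e, h3⟩
    · rw [filt_eHair]
      rwa [bot_range_eHair] at h3

theorem level_range_eHair (p : Σ v : H.V, Fin (m v - 1)) :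
    level ((H.hairExtension m).r (eHair p)) = p.2 := level_range_hair p

theorem level_source_eHair (p : Σ v : H.V, Fin (m v - 1)) :
    level ((H.hairExtension m).s (eHair p)) = p.2 + 1 := rfl

theorem level_range_le (e : (H.hairExtension m).E) :
    level ((H.hairExtension m).r e) ≤ level ((H.hairExtension m).s e) := by
  obtain ⟨e, rfl⟩ | ⟨p, rfl⟩ := edge_cases e
  · exact le_rfl
  · rw [level_range_eHair]
    exact Nat.le_succ _

theorem level_tgt_le {g : (H.hairExtension m).V} {l : List (H.hairExtension m).E}
    (hl : Valid g l) : level (tgt g l) ≤ level g := by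
  induction l generalizing g with
  | nil => exact le_rfl
  | cons e l ih =>
    obtain ⟨rfl, h2⟩ := hl
    exact (ih h2).trans (level_range_le e)

/-- A closed path which is not trivial contains an edge outside the hair. -/
theorem filt_ne_nil {g : (H.hairExtension m).V} {e : (H.hairExtension m).E}
    {l : List (H.hairExtension m).E} (hl : Valid g (e :: l)) (ht : g = tgt g (e :: l)) :
    filt ι (e :: l) ≠ [] := by
  obtain ⟨e, rfl⟩ | ⟨p, rfl⟩ := edge_cases e
  · rw [filt_eF]
    exact List.cons_ne_nil _ _
  · have h1 := level_tgt_le hl.2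
    have h2 : level g = level (tgt ((H.hairExtension m).r (eHair p)) l) := congrArg level ht
    have h3 : level g = p.2 + 1 := by rw [← hl.1, level_source_eHair]
    rw [level_range_eHair] at h1
    omega

/-- A path of the hair extension is determined by its ends and its edges outside the hair. -/
theorem filt_inj {g : (H.hairExtension m).V} {l l' : List (H.hairExtension m).E}
    (hl : Valid g l) (hl' : Valid g l') (ht : tgt g l = tgt g l')
    (hf : filt ι l = filt ι l') : l = l' := by
  induction l generalizing g l' with
  | nil =>
    cases l' with
    | nil => rfl
    | cons e' l' => exact absurd hf.symm (filt_ne_nil hl' ht)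
  | cons e l ih =>
    cases l' with
    | nil => exact absurd hf (filt_ne_nil hl ht.symm)
    | cons e' l' =>
      have hs := hl.1.trans hl'.1.symm
      have hee : e = e' ∧ filt ι l = filt ι l' := by
        obtain ⟨e, rfl⟩ | ⟨p, rfl⟩ := edge_cases e <;>
          obtain ⟨e', rfl⟩ | ⟨p', rfl⟩ := edge_cases e'
        · rw [filt_eF, filt_eF, List.cons.injEq] at hf
          exact ⟨by rw [ι.injE hf.1], hf.2⟩
        · cases hs
        · cases hs
        · exact ⟨congrArg eHair (Sum.inr.inj hs), hf⟩
      obtain ⟨rfl, hf'⟩ := hee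
      rw [ih hl.2 hl'.2 ht hf']

end Corner

/-! ### Spanning by products of paths and ghost paths -/

section PathGhost

variable {K : Type} [Field K] {G : FinGraph}

variable (K G) in
/-- The subalgebra of `L_K(G)` generated by the vertices and the ghost edges. -/
def GhostAlg : Subalgebra K (LeavittPathAlgebra K G) :=
  Algebra.adjoin K (Set.range (vert K G) ∪ Set.range (ghost K G))

/-- Since `e* a ∈ K e* + A` for `a` in the path subalgebra `A`, the span of the products of an
element of `A` and an element of the ghost subalgebra is a left ideal, hence everything. -/
theorem mem_pathAlg_mul_ghostAlg (y : LeavittPathAlgebra K G) :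
    y ∈ Subalgebra.toSubmodule (PathAlg K G) * Subalgebra.toSubmodule (GhostAlg K G) := by
  suffices h : ∀ w ∈ Subalgebra.toSubmodule (PathAlg K G) * Subalgebra.toSubmodule (GhostAlg K G),
      y * w ∈ Subalgebra.toSubmodule (PathAlg K G) * Subalgebra.toSubmodule (GhostAlg K G) by
    have h1 := h (1 * 1) (Submodule.mul_mem_mul (one_mem (PathAlg K G)) (one_mem (GhostAlg K G)))
    simpa using h1
  have hpath : ∀ a ∈ PathAlg K G, ∀ w ∈
      Subalgebra.toSubmodule (PathAlg K G) * Subalgebra.toSubmodule (GhostAlg K G),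
      a * w ∈ Subalgebra.toSubmodule (PathAlg K G) * Subalgebra.toSubmodule (GhostAlg K G) := by
    intro a ha w hw
    induction hw using Submodule.mul_induction_on' with
    | mem_mul_mem b hb c hc =>
      rw [← mul_assoc]
      exact Submodule.mul_mem_mul (mul_mem (S := Subalgebra K _) ha hb) hc
    | add x _ y _ hx hy => rw [mul_add]; exact add_mem hx hy
  induction y using lpa_induction with
  | halg k => exact hpath _ (Subalgebra.algebraMap_mem _ k)
  | hvert v => exact hpath _ (vert_mem v)
  | hedge e => exact hpath _ (edge_mem e)
  | hghost e =>
    intro w hw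
    induction hw using Submodule.mul_induction_on' with
    | mem_mul_mem b hb c hc =>
      obtain ⟨k, b', hb', h⟩ := exists_ghost_mul_eq e hb
      have hgc : ghost K G e * c ∈ GhostAlg K G :=
        mul_mem (Algebra.subset_adjoin (Or.inr ⟨e, rfl⟩)) hc
      rw [← mul_assoc, h, add_mul, smul_mul_assoc]
      refine add_mem (Submodule.smul_mem _ _ ?_) (Submodule.mul_mem_mul hb' hc)
      have h1 := Submodule.mul_mem_mul (M := Subalgebra.toSubmodule (PathAlg K G))
        (N := Subalgebra.toSubmodule (GhostAlg K G)) (one_mem (PathAlg K G)) hgc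
      rwa [one_mul] at h1
    | add x _ y _ hx hy => rw [mul_add]; exact add_mem hx hy
  | hadd a b ha hb =>
    intro w hw
    rw [add_mul]
    exact add_mem (ha w hw) (hb w hw)
  | hmul a b ha hb =>
    intro w hw
    rw [mul_assoc]
    exact ha _ (hb w hw)

end PathGhost

/-! ### The isomorphism onto the corner -/

section CornerIso

variable {K : Type} [Field K] {H E : FinGraph} {ι : HerEmb H E} {m : H.V → ℕ}
variable {ε : LeavittPathAlgebra K E} {x z : (H.hairExtension m).V → LeavittPathAlgebra K E}

theorem bot_tgt_filt {g : (H.hairExtension m).V} {l : List (H.hairExtension m).E}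
    (hl : Valid g l) : bot ι (tgt g l) = tgt (bot ι g) (filt ι l) := by
  induction l generalizing g with
  | nil => rfl
  | cons e l ih =>
    obtain ⟨rfl, h2⟩ := hl
    rw [tgt, ih h2]
    obtain ⟨e, rfl⟩ | ⟨p, rfl⟩ := edge_cases e
    · rw [filt_eF, tgt, bot_range_eF]
    · rw [filt_eHair, bot_range_eHair, s_eHair, bot_vHair]

theorem Sys.x_mul_vert (h : Sys ε (bot ι) x z) (g : (H.hairExtension m).V) {w : E.V}
    (hw : bot ι g ≠ w) : x g * vert K E w = 0 := by
  rw [← h.mul_vert g, mul_assoc, vert_mul_of_ne hw, mul_zero]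

theorem Sys.vert_mul_z (h : Sys ε (bot ι) x z) (g : (H.hairExtension m).V) {w : E.V}
    (hw : w ≠ bot ι g) : vert K E w * z g = 0 := by
  rw [← h.vert_mul g, ← mul_assoc, vert_mul_of_ne hw, zero_mul]

/-- The map `φ` from the Leavitt path algebra of the hair extension of `H` to `L_K(E)` sends the
generators to the elements in `Sys.preFamily`. -/
structure Lift (ι : HerEmb H E) (x z : (H.hairExtension m).V → LeavittPathAlgebra K E)
    (φ : LeavittPathAlgebra K (H.hairExtension m) →ₙₐ[K] LeavittPathAlgebra K E) : Prop where
  map_vert : ∀ g, φ (vert K _ g) = x g * z g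
  map_edge : ∀ e, φ (edge K _ e) =
    x ((H.hairExtension m).s e) * lab K ι e * z ((H.hairExtension m).r e)
  map_ghost : ∀ e, φ (ghost K _ e) =
    x ((H.hairExtension m).r e) * lab' K ι e * z ((H.hairExtension m).s e)

variable {φ : LeavittPathAlgebra K (H.hairExtension m) →ₙₐ[K] LeavittPathAlgebra K E}

theorem Lift.map_word (hφ : Lift ι x z φ) (h : Sys ε (bot ι) x z)
    {g : (H.hairExtension m).V} {l : List (H.hairExtension m).E} (hl : Valid g l) :
    φ (word K (g, l)) = x g * word K (bot ι g, filt ι l) * z (tgt g l) := by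
  induction l generalizing g with
  | nil =>
    have h1 : filt ι ([] : List (H.hairExtension m).E) = [] := rfl
    rw [word_nil, h1, word_nil, h.mul_vert, hφ.map_vert, tgt]
  | cons e l ih =>
    obtain ⟨rfl, h2⟩ := hl
    rw [word_cons l rfl, map_mul, ih h2, hφ.map_edge, ← lab_mul_word, tgt]
    have h3 : z ((H.hairExtension m).r e) * x ((H.hairExtension m).r e) =
        vert K E (bot ι ((H.hairExtension m).r e)) := by rw [h.mul_eq, if_pos rfl]
    calc _ = x ((H.hairExtension m).s e) * lab K ι e *
          (z ((H.hairExtension m).r e) * x ((H.hairExtension m).r e)) *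
          word K (bot ι ((H.hairExtension m).r e), filt ι l) *
          z (tgt ((H.hairExtension m).r e) l) := by simp only [mul_assoc]
      _ = _ := by
        rw [h3, mul_assoc (x _), lab_mul_range, mul_assoc (x _)]

/-- Distinct parallel paths of the hair extension lie over distinct paths of `E`, and paths are
linearly independent; so `φ` is injective on the path subalgebra, hence injective. -/
theorem Lift.injective (hφ : Lift ι x z φ) (h : Sys ε (bot ι) x z) : Function.Injective φ := by
  classical
  refine injective_of_pathAlg φ fun a ha h0 => ?_
  obtain ⟨f, hf, rfl⟩ := (Finsupp.mem_span_image_iff_linearCombination K).1 (mem_span_paths ha)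
  have hsup : ∀ w ∈ f.support, Valid w.1 w.2 := fun w hw => hf hw
  have key : ∀ g g', f.filter (fun w => w.1 = g ∧ tgt w.1 w.2 = g') = 0 := by
    intro g g'
    set f' := f.filter (fun w => w.1 = g ∧ tgt w.1 w.2 = g') with hf'
    have hsup' : ∀ w ∈ f'.support, Valid w.1 w.2 ∧ w.1 = g ∧ tgt w.1 w.2 = g' := by
      intro w hw
      rw [hf', Finsupp.support_filter, Finset.mem_filter] at hw
      exact ⟨hsup w hw.1, hw.2⟩
    let q : (H.hairExtension m).V × List (H.hairExtension m).E → E.V × List E.E :=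
      fun w => (bot ι w.1, filt ι w.2)
    have hq : f'.mapDomain q = 0 := by
      refine ev_injOn (K := K) ?_ ?_
      · refine (Finsupp.mem_supported _ _).2 fun w hw => ?_
        obtain ⟨w', hw', rfl⟩ := Finset.mem_image.1 (Finsupp.mapDomain_support hw)
        exact valid_filt (hsup' w' hw').1
      · have h1 : z g * φ (Finsupp.linearCombination K (word K) f) * x g' = 0 := by
          rw [h0, mul_zero, zero_mul]
        rw [ev, Finsupp.linearCombination_mapDomain, ← h1, Finsupp.linearCombination_apply,
          Finsupp.linearCombination_apply, Finsupp.sum, Finsupp.sum, map_sum, Finset.mul_sum,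
          Finset.sum_mul, hf', Finsupp.support_filter, Finset.sum_filter]
        refine Finset.sum_congr rfl fun w hw => ?_
        obtain ⟨g₁, l⟩ := w
        rw [map_smul, hφ.map_word h (hsup _ hw), mul_smul_comm, smul_mul_assoc]
        have h2 : z g * (x g₁ * word K (bot ι g₁, filt ι l) * z (tgt g₁ l)) * x g' =
            (z g * x g₁) * word K (bot ι g₁, filt ι l) * (z (tgt g₁ l) * x g') := by
          simp only [mul_assoc]
        rw [h2]
        by_cases hw' : g₁ = g ∧ tgt g₁ l = g'
        · obtain ⟨rfl, rfl⟩ := hw'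
          rw [if_pos ⟨rfl, rfl⟩, Finsupp.filter_apply_pos _ _ ⟨rfl, rfl⟩, h.mul_eq, if_pos rfl,
            h.mul_eq, if_pos rfl, vert_mul_word, bot_tgt_filt (hsup _ hw),
            word_mul_tgt (valid_filt (hsup _ hw))]
          rfl
        · rw [if_neg hw', h.mul_eq, h.mul_eq]
          by_cases h3 : g = g₁
          · rw [if_neg fun h4 => hw' ⟨h3.symm, h4⟩, mul_zero, smul_zero]
          · rw [if_neg h3, zero_mul, zero_mul, smul_zero]
    have hinj : Set.InjOn q (f'.support : Set _) := by
      rintro ⟨g₁, l⟩ h1 ⟨g₂, l'⟩ h2 h12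
      obtain ⟨h3, h4, h5⟩ := hsup' _ h1
      obtain ⟨h6, h7, h8⟩ := hsup' _ h2
      obtain rfl : g₁ = g₂ := h4.trans h7.symm
      exact congrArg (Prod.mk g₁) (filt_inj h3 h6 (h5.trans h8.symm) (congrArg Prod.snd h12))
    have h9 := Finsupp.mapDomain_injOn (M := K) _ hinj (x₁ := f') (x₂ := 0) (fun _ h => h)
      (by simp) (by rw [hq, Finsupp.mapDomain_zero])
    exact h9
  have hf0 : f = 0 := by
    ext w
    have := DFunLike.congr_fun (key w.1 (tgt w.1 w.2)) w
    rwa [Finsupp.filter_apply_pos _ _ ⟨rfl, rfl⟩] at this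
  rw [hf0, map_zero]

/-- The range of `φ` contains the products `x_g z_u` and `x_u z_g` when `g` sits in the hair over
`u`: these are images of paths in the hair. -/
theorem Lift.hair_mem (hφ : Lift ι x z φ) (h : Sys ε (bot ι) x z) (g : (H.hairExtension m).V) :
    x g * z (vF (base g)) ∈ NonUnitalAlgHom.range φ ∧
      x (vF (base g)) * z g ∈ NonUnitalAlgHom.range φ := by
  induction hk : level g generalizing g with
  | zero =>
    obtain ⟨u, rfl⟩ | ⟨p, rfl⟩ := vert_cases g
    · exact ⟨⟨_, hφ.map_vert (vF u)⟩, ⟨_, hφ.map_vert (vF u)⟩⟩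
    · exact absurd hk (Nat.succ_ne_zero _)
  | succ k ih =>
    obtain ⟨u, rfl⟩ | ⟨p, rfl⟩ := vert_cases g
    · exact absurd hk.symm (Nat.succ_ne_zero _)
    · have hlev : level ((H.hairExtension m).r (eHair p)) = k := by
        rw [level_range_eHair]
        exact Nat.succ_injective hk
      obtain ⟨h1, h2⟩ := ih _ hlev
      have hb : base ((H.hairExtension m).r (eHair p)) = base (vHair p) := base_range_hair p
      have hbot : bot ι ((H.hairExtension m).r (eHair p)) = bot ι (vHair p) :=
        congrArg ι.toV hb
      have h3 : x (vHair p) * z ((H.hairExtension m).r (eHair p)) ∈ NonUnitalAlgHom.range φ :=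
        ⟨edge K _ (eHair p), by
          refine (hφ.map_edge _).trans ?_
          rw [s_eHair, lab_eHair, ← bot_vHair, h.mul_vert]⟩
      have h4 : x ((H.hairExtension m).r (eHair p)) * z (vHair p) ∈ NonUnitalAlgHom.range φ :=
        ⟨ghost K _ (eHair p), by
          refine (hφ.map_ghost _).trans ?_
          rw [s_eHair, lab'_eHair, ← bot_vHair, mul_assoc, h.vert_mul]⟩
      rw [hb] at h1 h2
      constructor
      · have h5 := mul_mem h3 h1
        rwa [mul_assoc, ← mul_assoc (z _), h.mul_eq, if_pos rfl, hbot, ← mul_assoc,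
          h.mul_vert] at h5
      · have h5 := mul_mem h2 h4
        rwa [mul_assoc, ← mul_assoc (z _), h.mul_eq, if_pos rfl, hbot, h.vert_mul] at h5

/-- `Inner φ x z y` says that all corners `x_g y z_{g'}` lie in the range of `φ`. -/
def Inner (φ : LeavittPathAlgebra K (H.hairExtension m) →ₙₐ[K] LeavittPathAlgebra K E)
    (x z : (H.hairExtension m).V → LeavittPathAlgebra K E) (y : LeavittPathAlgebra K E) : Prop :=
  ∀ g g', x g * y * z g' ∈ NonUnitalAlgHom.range φ

theorem Lift.inner_one (hφ : Lift ι x z φ) (h : Sys ε (bot ι) x z) : Inner φ x z 1 := by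
  intro g g'
  rw [mul_one]
  by_cases hb : base g = base g'
  · have h1 := mul_mem (hφ.hair_mem h g).1 (hφ.hair_mem h g').2
    have hbot : bot ι (vF (base g) : (H.hairExtension m).V) = bot ι g := rfl
    rwa [← hb, mul_assoc, ← mul_assoc (z _), h.mul_eq, if_pos rfl, hbot, ← mul_assoc,
      h.mul_vert] at h1
  · rw [← h.mul_vert g, mul_assoc, h.vert_mul_z (w := bot ι g) g' fun h => hb (ι.injV h), mul_zero]
    exact zero_mem _

theorem Lift.inner_left (hφ : Lift ι x z φ) (h : Sys ε (bot ι) x z) {a : LeavittPathAlgebra K E}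
    (ha : a ∈ PathAlg K E) : ∀ y, Inner φ x z y → Inner φ x z (a * y) := by
  induction ha using Algebra.adjoin_induction with
  | mem a ha =>
    intro y hy g g'
    obtain ⟨w, rfl⟩ | ⟨f, rfl⟩ := ha
    · rw [← mul_assoc]
      by_cases hw : bot ι g = w
      · rw [← hw, h.mul_vert]; exact hy g g'
      · rw [h.x_mul_vert g hw, zero_mul, zero_mul]; exact zero_mem _
    · by_cases hs : E.s f = bot ι g
      · obtain ⟨e, rfl⟩ := ι.full f _ hs
        have hb : H.s e = base g := ι.injV ((ι.s_toE e).symm.trans hs)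
        have h1 := (hφ.hair_mem h g).1
        rw [← hb] at h1
        have h2 := mul_mem (mul_mem h1 ⟨_, hφ.map_edge (eF e)⟩) (hy (vF (H.r e)) g')
        rw [s_eF, r_eF, lab_eF] at h2
        convert h2 using 1
        have h3 : x g * z (vF (H.s e)) * (x (vF (H.s e)) * edge K E (ι.toE e) * z (vF (H.r e))) *
            (x (vF (H.r e)) * y * z g') = x g * ((z (vF (H.s e)) * x (vF (H.s e))) *
              (edge K E (ι.toE e) * (z (vF (H.r e)) * x (vF (H.r e))))) * y * z g' := by
          simp only [mul_assoc]
        rw [h3, h.mul_eq, if_pos rfl, h.mul_eq, if_pos rfl, bot_vF, bot_vF, ← ι.s_toE, ← ι.r_toE,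
          edge_mul_range, source_mul_edge]
        simp only [mul_assoc]
      · rw [← source_mul_edge f, mul_assoc (vert K E _), ← mul_assoc (x g), h.x_mul_vert g fun h => hs h.symm,
          zero_mul, zero_mul]
        exact zero_mem _
  | algebraMap k =>
    intro y hy g g'
    rw [← Algebra.smul_def, mul_smul_comm, smul_mul_assoc]
    exact SMulMemClass.smul_mem k (hy g g')
  | add a b _ _ ha hb =>
    intro y hy g g'
    rw [add_mul, mul_add, add_mul]
    exact add_mem (ha y hy g g') (hb y hy g g')
  | mul a b _ _ ha hb =>
    intro y hy
    rw [mul_assoc]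
    exact ha _ (hb y hy)

theorem Lift.inner_right (hφ : Lift ι x z φ) (h : Sys ε (bot ι) x z) {a : LeavittPathAlgebra K E}
    (ha : a ∈ GhostAlg K E) : ∀ y, Inner φ x z y → Inner φ x z (y * a) := by
  induction ha using Algebra.adjoin_induction with
  | mem a ha =>
    intro y hy g g'
    obtain ⟨w, rfl⟩ | ⟨f, rfl⟩ := ha
    · rw [mul_assoc, mul_assoc]
      by_cases hw : w = bot ι g'
      · rw [hw, h.vert_mul, ← mul_assoc]; exact hy g g'
      · rw [h.vert_mul_z g' hw, mul_zero, mul_zero]; exact zero_mem _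
    · by_cases hs : E.s f = bot ι g'
      · obtain ⟨e, rfl⟩ := ι.full f _ hs
        have hb : H.s e = base g' := ι.injV ((ι.s_toE e).symm.trans hs)
        have h1 := (hφ.hair_mem h g').2
        rw [← hb] at h1
        have h2 := mul_mem (hy g (vF (H.r e))) (mul_mem ⟨_, hφ.map_ghost (eF e)⟩ h1)
        rw [s_eF, r_eF, lab'_eF] at h2
        convert h2 using 1
        have h3 : x g * y * z (vF (H.r e)) * (x (vF (H.r e)) * ghost K E (ι.toE e) *
            z (vF (H.s e)) * (x (vF (H.s e)) * z g')) = x g * y *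
              (((z (vF (H.r e)) * x (vF (H.r e))) * ghost K E (ι.toE e)) *
                (z (vF (H.s e)) * x (vF (H.s e)))) * z g' := by
          simp only [mul_assoc]
        rw [h3, h.mul_eq, if_pos rfl, h.mul_eq, if_pos rfl, bot_vF, bot_vF, ← ι.s_toE, ← ι.r_toE,
          range_mul_ghost, ghost_mul_source]
        simp only [mul_assoc]
      · rw [← ghost_mul_source f, ← mul_assoc, ← mul_assoc, mul_assoc _ _ (z g'),
          h.vert_mul_z g' hs, mul_zero]
        exact zero_mem _
  | algebraMap k =>
    intro y hy g g'
    rw [← Algebra.commutes, ← Algebra.smul_def, mul_smul_comm, smul_mul_assoc]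
    exact SMulMemClass.smul_mem k (hy g g')
  | add a b _ _ ha hb =>
    intro y hy g g'
    rw [mul_add, mul_add, add_mul]
    exact add_mem (ha y hy g g') (hb y hy g g')
  | mul a b _ _ ha hb =>
    intro y hy
    rw [← mul_assoc]
    exact hb _ (ha y hy)

theorem Lift.inner (hφ : Lift ι x z φ) (h : Sys ε (bot ι) x z) (y : LeavittPathAlgebra K E) :
    Inner φ x z y := by
  induction mem_pathAlg_mul_ghostAlg y using Submodule.mul_induction_on' with
  | mem_mul_mem a ha b hb =>
    have h1 := hφ.inner_left h ha _ (hφ.inner_right h hb _ (hφ.inner_one h))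
    rwa [one_mul] at h1
  | add a _ b _ ha hb =>
    intro g k
    rw [mul_add, add_mul]
    exact add_mem (ha g k) (hb g k)

/-- A system whose vertices are those of a hair extension of the hereditary subgraph `H` identifies
the corner with the Leavitt path algebra of that hair extension. -/
theorem Sys.isCornerIso (h : Sys ε (bot ι) x z) :
    IsCornerIso K (LeavittPathAlgebra K (H.hairExtension m)) (LeavittPathAlgebra K E) ε := by
  obtain ⟨φ, h1, hv, he, hg⟩ := h.preFamily.exists_lift (K := K) h.sum_eq
  have hφ : Lift ι x z φ := ⟨hv, he, hg⟩
  refine ⟨φ, hφ.injective h, Set.ext fun y => ⟨?_, fun hy => ?_⟩⟩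
  · rintro ⟨t, rfl⟩
    change ε * φ t * ε = φ t
    rw [← h1, ← map_mul, ← map_mul, one_mul, mul_one]
  · change ε * y * ε = y at hy
    have h2 : y = ∑ g, ∑ g', x g * (z g * y * x g') * z g' := by
      conv_lhs => rw [← hy, ← h.sum_eq]
      rw [Finset.sum_mul, Finset.sum_mul]
      refine Finset.sum_congr rfl fun g _ => ?_
      rw [Finset.mul_sum]
      refine Finset.sum_congr rfl fun g' _ => ?_
      simp only [mul_assoc]
    have h3 : y ∈ NonUnitalAlgHom.range φ := by
      rw [h2]
      exact sum_mem fun g _ => sum_mem fun g' _ => hφ.inner h _ g g'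
    exact h3

end CornerIso

/-! ### From idempotents to hair extensions -/

section Final

variable {K : Type} [Field K] {F : FinGraph} {n : F.V → ℕ}

/-- A vertex of the hair extension is its base together with a position on the strand. -/
def hairEquiv (H : FinGraph) (m : H.V → ℕ) :
    (H.hairExtension m).V ≃ Σ u : H.V, Option (Fin (m u - 1)) where
  toFun := Sum.elim (fun u => ⟨u, none⟩) fun p => ⟨p.1, some p.2⟩
  invFun q := match q with
    | ⟨u, none⟩ => Sum.inl u
    | ⟨u, some i⟩ => Sum.inr ⟨u, i⟩
  left_inv g := by rcases g with u | p <;> rfl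
  right_inv q := by rcases q with ⟨u, _ | i⟩ <;> rfl

theorem hairEquiv_fst (H : FinGraph) (m : H.V → ℕ) (g : (H.hairExtension m).V) :
    (hairEquiv H m g).1 = base g := by rcases g with u | p <;> rfl

/-- A finite family of vertices meeting every vertex is, up to reindexing, the family of the bases
of the vertices of a hair extension. -/
theorem exists_hair_reindex (H : FinGraph) {J : Type} [Fintype J] (v : J → H.V)
    (hv : Function.Surjective v) : ∃ m : H.V → ℕ, (∀ u, 0 < m u) ∧
      ∃ σ : (H.hairExtension m).V ≃ J, ∀ g, v (σ g) = base g := by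
  have hpos : ∀ u, 0 < Fintype.card {j // v j = u} := fun u =>
    Fintype.card_pos_iff.2 (nonempty_subtype.2 (hv u))
  refine ⟨fun u => Fintype.card {j // v j = u}, hpos, ?_⟩
  have hτ : ∀ u, Nonempty (Option (Fin (Fintype.card {j // v j = u} - 1)) ≃ {j // v j = u}) := by
    intro u
    refine Fintype.card_eq.1 ?_
    rw [Fintype.card_option, Fintype.card_fin, Nat.sub_add_cancel (hpos u)]
  let τ := fun u => (hτ u).some
  refine ⟨(hairEquiv H _).trans ((Equiv.sigmaCongrRight τ).trans (Equiv.sigmaFiberEquiv v)),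
    fun g => ?_⟩
  rw [← hairEquiv_fst]
  exact (τ _ _).2

theorem SysOn.exists_isCornerIso {ε : LeavittPathAlgebra K (F.hairExtension n)} {J : Type}
    [Fintype J] [DecidableEq J] {v : J → F.V} (hs : SysOn ε J v) {H : FinGraph}
    (ι : HerEmb H (F.hairExtension n)) (v' : J → H.V) (hsurj : Function.Surjective v')
    (hv : ∀ j, ι.toV (v' j) = vF (v j)) :
    ∃ m : H.V → ℕ, (∀ u, 0 < m u) ∧ IsCornerIso K (LeavittPathAlgebra K (H.hairExtension m))
      (LeavittPathAlgebra K (F.hairExtension n)) ε := by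
  obtain ⟨x, z, h⟩ := hs
  obtain ⟨m, hm, σ, hσ⟩ := exists_hair_reindex H v' hsurj
  refine ⟨m, hm, ?_⟩
  have hbot : (fun j => (vF (v j) : (F.hairExtension n).V)) ∘ σ = bot ι := by
    funext g
    rw [Function.comp_apply, ← hv, hσ, bot]
  have h1 := h.reindex σ
  rw [hbot] at h1
  exact h1.isCornerIso

/-- The restriction of `F` to a hereditary set, inside the hair extension of `F`. -/
def restrictEmb (F : FinGraph) (n : F.V → ℕ) (T : Finset F.V) (hT : F.Hereditary T) :
    HerEmb (F.restrict T hT) (F.hairExtension n) where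
  toV u := vF u.1
  toE e := eF e.1
  injV _ _ h := Subtype.ext (vF_inj h)
  injE _ _ h := Subtype.ext (eF_inj h)
  s_toE _ := rfl
  r_toE _ := rfl
  full f u h := by
    obtain ⟨f, rfl, hf⟩ := exists_of_s_eq_inl h
    exact ⟨⟨f, hf ▸ u.2⟩, rfl⟩

/-- The graph `F` inside its hair extension. -/
def selfEmb (F : FinGraph) (n : F.V → ℕ) : HerEmb F (F.hairExtension n) where
  toV u := vF u
  toE e := eF e
  injV _ _ h := vF_inj h
  injE _ _ h := eF_inj h
  s_toE _ := rfl
  r_toE _ := rfl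
  full f u h := by
    obtain ⟨f, rfl, -⟩ := exists_of_s_eq_inl h
    exact ⟨f, rfl⟩

/-- For a full idempotent the hereditary set is everything: a hereditary set `T` of vertices of a
totally looped graph is saturated, so some representation of `L_K(F⁺)` kills precisely the vertices
over `T`.  It kills `ε`, hence `1`, so there is no vertex outside `T`. -/
theorem surjective_of_full (hF : F.TotallyLooped) {ε : LeavittPathAlgebra K (F.hairExtension n)}
    (hfull : IsFullIdempotent ε) {J : Type} [Fintype J] [DecidableEq J] {v : J → F.V}
    (hs : SysOn ε J v) (hT : F.Hereditary (Finset.univ.image v)) : Function.Surjective v := by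
  intro u
  by_contra hu
  have huT : u ∉ Finset.univ.image v := fun h => hu (by simpa using h)
  obtain ⟨X, hX, hX'⟩ := exists_branching (F.hairExtension n)
    (fun g => base g ∉ Finset.univ.image v)
    (by
      intro e he
      obtain ⟨f, rfl⟩ | ⟨p, rfl⟩ := edge_cases e
      · exact fun h => he (hT f h)
      · have hb : base ((F.hairExtension n).r (eHair p)) = p.1 := base_range_hair p
        rw [hb] at he
        exact he)
    (by
      intro g hg hreg
      obtain ⟨w, rfl⟩ | ⟨p, rfl⟩ := vert_cases g
      · obtain ⟨e, he⟩ := hreg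
        obtain ⟨f, rfl, hf⟩ := exists_of_s_eq_inl he
        obtain ⟨l, hl, hl'⟩ := hF w ⟨f, hf⟩
        refine ⟨eF l, by rw [s_eF, hl], ?_⟩
        rw [r_eF, hl']
        exact hg
      · refine ⟨eHair p, rfl, ?_⟩
        have hb : base ((F.hairExtension n).r (eHair p)) = p.1 := base_range_hair p
        rw [hb]
        exact hg)
  obtain ⟨ψ, hψ, -, -⟩ := (X.family (K := K)).exists_lift (K := K)
  obtain ⟨x, z, h⟩ := hs
  have hvert : ∀ j, ψ (vert K _ (vF (v j))) = 0 := by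
    intro j
    rw [hψ]
    refine LinearMap.ext fun f => funext fun b => ?_
    rw [Branching.opVert_apply, if_neg]
    · rfl
    · intro hb
      refine hX b ?_
      rw [hb]
      exact Finset.mem_image.2 ⟨j, Finset.mem_univ _, rfl⟩
  have hε : ψ ε = 0 := by
    rw [← h.sum_eq, map_sum]
    refine Finset.sum_eq_zero fun j _ => ?_
    rw [← h.mul_vert j, map_mul, map_mul, hvert, mul_zero, zero_mul]
  obtain ⟨-, k, a, b, hab⟩ := hfull
  have h1 : ψ 1 = 0 := by
    rw [← hab, map_sum]
    refine Finset.sum_eq_zero fun i _ => ?_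
    rw [map_mul, map_mul, hε, mul_zero, zero_mul]
  obtain ⟨b₀, -⟩ := hX' (vF u) huT
  rw [map_one] at h1
  exact one_ne_zero (congrFun (LinearMap.congr_fun h1 fun _ : X.B => (1 : K)) b₀)

end Final
end HairCorner

/-- Every nonzero corner of the Leavitt path algebra of a hair
extension of a totally looped graph `F` is the Leavitt path algebra of a hair extension
of a restriction `F_T`; of a hair extension of `F` itself when the idempotent is full. -/
theorem hair_corner (K : Type) [Field K] (F : FinGraph) (hF : F.TotallyLooped)
    (n : F.V → ℕ) (hn : ∀ v, 0 < n v)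
    (ε : LeavittPathAlgebra K (F.hairExtension n)) (hε : IsIdempotentElem ε)
    (hε0 : ε ≠ 0) :
    (∃ (T : Finset F.V) (hT : F.Hereditary T) (m : {v : F.V // v ∈ T} → ℕ),
        (∀ v, 0 < m v) ∧
        IsCornerIso K (LeavittPathAlgebra K ((F.restrict T hT).hairExtension m))
          (LeavittPathAlgebra K (F.hairExtension n)) ε) ∧
    (IsFullIdempotent ε →
      ∃ m : F.V → ℕ, (∀ v, 0 < m v) ∧
        IsCornerIso K (LeavittPathAlgebra K (F.hairExtension m))
          (LeavittPathAlgebra K (F.hairExtension n)) ε) := by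
  obtain ⟨J, _, _, v, hs, hT⟩ := HairCorner.exists_hereditary_sysOn hF hε
  refine ⟨⟨_, hT, ?_⟩, fun hfull => ?_⟩
  · refine hs.exists_isCornerIso (HairCorner.restrictEmb F n _ hT)
      (fun j => ⟨v j, Finset.mem_image.2 ⟨j, Finset.mem_univ _, rfl⟩⟩) ?_ fun _ => rfl
    rintro ⟨u, hu⟩
    obtain ⟨j, -, hj⟩ := Finset.mem_image.1 hu
    exact ⟨j, Subtype.ext hj⟩
  · exact hs.exists_isCornerIso (HairCorner.selfEmb F n) v
      (HairCorner.surjective_of_full hF hfull hs hT) fun _ => rfl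
end

section
/- Let K be any field, let E be a finite graph, and let n be a positive integer. Then there is a K-algebra isomorphism M_n(L_K(E)) ≅ L_K(M_nE), where M_nE is the hair extension E^+(n, n, ..., n) of E. In particular, any full n × n matrix ring over a Leavitt path algebra of a finite graph is isomorphic to the Leavitt path algebra of a hair extension of that graph. -/
namespace HairMatrix

open Finset

/-! ### The universal property of Leavitt path algebras -/

/-- A Leavitt `G`-family in a unital ring `A`: elements indexed by vertices, edges and ghost
edges which satisfy the defining relations of `L_K(G)`. -/
structure Family (G : FinGraph) (A : Type) [Ring A] where
  vt : G.V → A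
  ed : G.E → A
  gh : G.E → A
  vertMul : ∀ v w, vt v * vt w = if v = w then vt v else 0
  edgeLeft : ∀ e, vt (G.s e) * ed e = ed e
  edgeRight : ∀ e, ed e * vt (G.r e) = ed e
  ghostLeft : ∀ e, vt (G.r e) * gh e = gh e
  ghostRight : ∀ e, gh e * vt (G.s e) = gh e
  ghostEdge : ∀ e f, gh e * ed f = if e = f then vt (G.r e) else 0
  ck : ∀ v, G.IsRegular v → vt v = ∑ e : G.E, if G.s e = v then ed e * gh e else 0
  unit : 1 = ∑ v, vt v

variable {K : Type} [Field K] {G : FinGraph} {A : Type} [Ring A] [Algebra K A]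

/-- The function on generators determined by a Leavitt family. -/
def Family.gen (F : Family G A) : LPAGen G → A
  | .vert v => F.vt v
  | .edge e => F.ed e
  | .ghost e => F.gh e

/-- The homomorphism out of `L_K(G)` determined by a Leavitt family. -/
def Family.lift (K : Type) [Field K] [Algebra K A] (F : Family G A) :
    LeavittPathAlgebra K G →ₐ[K] A :=
  RingQuot.liftAlgHom K ⟨FreeAlgebra.lift K F.gen, by
    intro x y h
    induction h with
    | vertMul v w =>
      have := F.vertMul v w
      split_ifs at this ⊢ <;> simpa [Family.gen] using this
    | edgeLeft e => simpa [Family.gen] using F.edgeLeft e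
    | edgeRight e => simpa [Family.gen] using F.edgeRight e
    | ghostLeft e => simpa [Family.gen] using F.ghostLeft e
    | ghostRight e => simpa [Family.gen] using F.ghostRight e
    | ghostEdge e f =>
      have := F.ghostEdge e f
      split_ifs at this ⊢ <;> simpa [Family.gen] using this
    | cuntzKrieger v hv => simpa [Family.gen, ← sum_filter] using F.ck v hv
    | unit => simpa [Family.gen] using F.unit⟩

@[simp] lemma Family.lift_vert (F : Family G A) (v : G.V) :
    F.lift K (LeavittPathAlgebra.vert K G v) = F.vt v := by
  simp [Family.lift, LeavittPathAlgebra.vert, Family.gen]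

@[simp] lemma Family.lift_edge (F : Family G A) (e : G.E) :
    F.lift K (LeavittPathAlgebra.edge K G e) = F.ed e := by
  simp [Family.lift, LeavittPathAlgebra.edge, Family.gen]

@[simp] lemma Family.lift_ghost (F : Family G A) (e : G.E) :
    F.lift K (LeavittPathAlgebra.ghost K G e) = F.gh e := by
  simp [Family.lift, LeavittPathAlgebra.ghost, Family.gen]

lemma lpa_hom_ext {f g : LeavittPathAlgebra K G →ₐ[K] A}
    (hv : ∀ v, f (LeavittPathAlgebra.vert K G v) = g (LeavittPathAlgebra.vert K G v))
    (he : ∀ e, f (LeavittPathAlgebra.edge K G e) = g (LeavittPathAlgebra.edge K G e))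
    (hg : ∀ e, f (LeavittPathAlgebra.ghost K G e) = g (LeavittPathAlgebra.ghost K G e)) :
    f = g := by
  apply RingQuot.ringQuot_ext'
  apply FreeAlgebra.hom_ext
  funext x
  cases x with
  | vert v => exact hv v
  | edge e => exact he e
  | ghost e => exact hg e

variable (K G) in
/-- The generators of `L_K(G)` form a Leavitt family. -/
def taut : Family G (LeavittPathAlgebra K G) where
  vt := LeavittPathAlgebra.vert K G
  ed := LeavittPathAlgebra.edge K G
  gh := LeavittPathAlgebra.ghost K G
  vertMul v w := by
    have := RingQuot.mkAlgHom_rel K (LeavittRel.vertMul (K := K) v w)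
    rw [map_mul, apply_ite (RingQuot.mkAlgHom K _), map_zero] at this
    exact this
  edgeLeft e := by
    have := RingQuot.mkAlgHom_rel K (LeavittRel.edgeLeft (K := K) e)
    rwa [map_mul] at this
  edgeRight e := by
    have := RingQuot.mkAlgHom_rel K (LeavittRel.edgeRight (K := K) e)
    rwa [map_mul] at this
  ghostLeft e := by
    have := RingQuot.mkAlgHom_rel K (LeavittRel.ghostLeft (K := K) e)
    rwa [map_mul] at this
  ghostRight e := by
    have := RingQuot.mkAlgHom_rel K (LeavittRel.ghostRight (K := K) e)
    rwa [map_mul] at this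
  ghostEdge e f := by
    have := RingQuot.mkAlgHom_rel K (LeavittRel.ghostEdge (K := K) e f)
    rw [map_mul, apply_ite (RingQuot.mkAlgHom K _), map_zero] at this
    exact this
  ck v hv := by
    have := RingQuot.mkAlgHom_rel K (LeavittRel.cuntzKrieger (K := K) v hv)
    simp only [map_sum, map_mul] at this
    rw [← sum_filter]
    exact this
  unit := by
    have := RingQuot.mkAlgHom_rel K (LeavittRel.unit (K := K) (G := G))
    rw [map_sum, map_one] at this
    exact this

/-- An element commutes with the whole image of `f` once it commutes with the images of the
generators. -/
lemma commute_of_gen (f : LeavittPathAlgebra K G →ₐ[K] A) (u : A)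
    (hv : ∀ v, Commute u (f (LeavittPathAlgebra.vert K G v)))
    (he : ∀ e, Commute u (f (LeavittPathAlgebra.edge K G e)))
    (hg : ∀ e, Commute u (f (LeavittPathAlgebra.ghost K G e)))
    (x : LeavittPathAlgebra K G) : Commute u (f x) := by
  obtain ⟨y, rfl⟩ := RingQuot.mkAlgHom_surjective K (LeavittRel K G) x
  induction y using FreeAlgebra.induction with
  | grade0 r =>
    rw [AlgHom.commutes, AlgHom.commutes]
    exact (Algebra.commutes r u).symm
  | grade1 x =>
    cases x with
    | vert v => exact hv v
    | edge e => exact he e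
    | ghost e => exact hg e
  | mul a b ha hb => rw [map_mul, map_mul]; exact ha.mul_right hb
  | add a b ha hb => rw [map_add, map_add]; exact ha.add_right hb

/-! ### Hair paths in a Leavitt family of the hair extension -/

variable {E : FinGraph} {m : ℕ}

/-- The graph `M_{m+1}E`. -/
abbrev HG (E : FinGraph) (m : ℕ) : FinGraph := E.hairExtension fun _ => m + 1

/-- The `i`-th vertex of the hair at `v`, the `0`-th one being `v` itself. -/
def hv (m : ℕ) (v : E.V) (i : Fin (m + 1)) : (HG E m).V :=
  Fin.cases (Sum.inl v) (fun j => Sum.inr ⟨v, j⟩) i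

/-- The hair edge from vertex `i + 1` to vertex `i` of the hair at `v`. -/
def he (v : E.V) (i : Fin m) : (HG E m).E := Sum.inr ⟨v, i⟩

/-- An edge of `E`, seen in the hair extension. -/
def be (m : ℕ) (e : E.E) : (HG E m).E := Sum.inl e

lemma hv_inj {v w : E.V} {i j : Fin (m + 1)} : hv m v i = hv m w j ↔ v = w ∧ i = j := by
  refine ⟨fun h => ?_, fun h => by rw [h.1, h.2]⟩
  induction i using Fin.cases with
  | zero =>
    induction j using Fin.cases with
    | zero => exact ⟨Sum.inl.inj h, rfl⟩
    | succ j => cases h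
  | succ i =>
    induction j using Fin.cases with
    | zero => cases h
    | succ j =>
      obtain ⟨h1, h2⟩ := Sigma.mk.inj (Sum.inr.inj h)
      exact ⟨h1, congrArg Fin.succ (eq_of_heq (by subst h1; exact h2))⟩

lemma exists_hv (x : (HG E m).V) : ∃ v i, x = hv m v i := by
  rcases x with v | ⟨v, i⟩
  · exact ⟨v, 0, rfl⟩
  · exact ⟨v, Fin.succ i, rfl⟩

lemma s_he (v : E.V) (i : Fin m) : (HG E m).s (he v i) = hv m v i.succ := rfl

lemma r_he (v : E.V) (i : Fin m) : (HG E m).r (he v i) = hv m v i.castSucc := by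
  obtain ⟨i, hi⟩ := i
  cases i with
  | zero => rfl
  | succ k => rfl

lemma s_be (e : E.E) : (HG E m).s (be m e) = hv m (E.s e) 0 := rfl

lemma r_be (e : E.E) : (HG E m).r (be m e) = hv m (E.r e) 0 := rfl

lemma be_inj {e f : E.E} : be m e = be m f ↔ e = f := Sum.inl_injective.eq_iff

lemma he_inj {v w : E.V} {i j : Fin m} : he v i = he w j ↔ v = w ∧ i = j := by
  refine ⟨fun h => ?_, fun h => by rw [h.1, h.2]⟩
  cases h; exact ⟨rfl, rfl⟩

lemma exists_edge (x : (HG E m).E) : (∃ e, x = be m e) ∨ ∃ v i, x = he v i := by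
  rcases x with e | ⟨v, i⟩
  · exact Or.inl ⟨e, rfl⟩
  · exact Or.inr ⟨v, i, rfl⟩

lemma sum_V {M : Type} [AddCommMonoid M] (f : (HG E m).V → M) :
    ∑ x, f x = ∑ v : E.V, ∑ i, f (hv m v i) := by
  have h1 : ∑ x, f x = ∑ v : E.V, f (Sum.inl v) + ∑ v : E.V, ∑ i : Fin m, f (Sum.inr ⟨v, i⟩) := by
    refine (Fintype.sum_sum_type _).trans ?_
    congr 1
    exact Fintype.sum_sigma _
  rw [h1, ← sum_add_distrib]
  exact sum_congr rfl fun v _ => (Fin.sum_univ_succ (fun i => f (hv m v i))).symm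

lemma sum_E {M : Type} [AddCommMonoid M] (f : (HG E m).E → M) :
    ∑ x, f x = ∑ e, f (be m e) + ∑ v : E.V, ∑ i, f (he v i) := by
  refine (Fintype.sum_sum_type _).trans ?_
  congr 1
  exact Fintype.sum_sigma _

section Paths

variable (F : Family (HG E m) A)

lemma vt_mul (v w : E.V) (i j : Fin (m + 1)) :
    F.vt (hv m v i) * F.vt (hv m w j) = if v = w ∧ i = j then F.vt (hv m v i) else 0 := by
  rw [F.vertMul]; simp only [hv_inj]

lemma ck_base (v : E.V) (h : E.IsRegular v) :
    F.vt (hv m v 0) = ∑ e, if E.s e = v then F.ed (be m e) * F.gh (be m e) else 0 := by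
  obtain ⟨e, rfl⟩ := h
  rw [F.ck (hv m (E.s e) 0) ⟨be m e, rfl⟩, sum_E]
  simp [s_he, s_be, hv_inj]

lemma ck_hair (v : E.V) (i : Fin m) :
    F.vt (hv m v i.succ) = F.ed (he v i) * F.gh (he v i) := by
  rw [F.ck (hv m v i.succ) ⟨he v i, rfl⟩, sum_E]
  simp [s_he, s_be, hv_inj, (Fin.succ_ne_zero _).symm, ite_and]

end Paths

/-- The path running down the hair at `v` from its `i`-th vertex to `v`. -/
def p (F : Family (HG E m) A) (v : E.V) (i : Fin (m + 1)) : A :=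
  Fin.induction (F.vt (hv m v 0)) (fun i x => F.ed (he v i) * x) i

/-- The ghost path of `p`. -/
def q (F : Family (HG E m) A) (v : E.V) (i : Fin (m + 1)) : A :=
  Fin.induction (F.vt (hv m v 0)) (fun i x => x * F.gh (he v i)) i

section Paths

variable (F : Family (HG E m) A)

lemma p_zero (v : E.V) : p F v 0 = F.vt (hv m v 0) := rfl

lemma q_zero (v : E.V) : q F v 0 = F.vt (hv m v 0) := rfl

lemma p_succ (v : E.V) (i : Fin m) : p F v i.succ = F.ed (he v i) * p F v i.castSucc := rfl

lemma q_succ (v : E.V) (i : Fin m) : q F v i.succ = q F v i.castSucc * F.gh (he v i) := rfl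

lemma vt_mul_p (v : E.V) (i : Fin (m + 1)) : F.vt (hv m v i) * p F v i = p F v i := by
  induction i using Fin.cases with
  | zero => simp [p_zero, vt_mul]
  | succ i => rw [p_succ, ← mul_assoc, ← s_he, F.edgeLeft]

lemma q_mul_vt (v : E.V) (i : Fin (m + 1)) : q F v i * F.vt (hv m v i) = q F v i := by
  induction i using Fin.cases with
  | zero => simp [q_zero, vt_mul]
  | succ i => rw [q_succ, mul_assoc, ← s_he, F.ghostRight]

lemma p_mul_vt (v : E.V) (i : Fin (m + 1)) : p F v i * F.vt (hv m v 0) = p F v i := by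
  induction i using Fin.induction with
  | zero => simp [p_zero, vt_mul]
  | succ i ih => rw [p_succ, mul_assoc, ih]

lemma vt_mul_q (v : E.V) (i : Fin (m + 1)) : F.vt (hv m v 0) * q F v i = q F v i := by
  induction i using Fin.induction with
  | zero => simp [q_zero, vt_mul]
  | succ i ih => rw [q_succ, ← mul_assoc, ih]

lemma q_mul_p_self (v : E.V) (i : Fin (m + 1)) : q F v i * p F v i = F.vt (hv m v 0) := by
  induction i using Fin.induction with
  | zero => simp [p_zero, q_zero, vt_mul]
  | succ i ih =>
    rw [q_succ, p_succ, mul_assoc, ← mul_assoc (F.gh _), F.ghostEdge, if_pos rfl, r_he,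
      vt_mul_p, ih]

lemma q_mul_p (v w : E.V) (i j : Fin (m + 1)) :
    q F v i * p F w j = if v = w ∧ i = j then F.vt (hv m v 0) else 0 := by
  split_ifs with h
  · rw [← h.1, ← h.2, q_mul_p_self]
  · rw [← q_mul_vt, ← vt_mul_p, mul_assoc, ← mul_assoc (F.vt _), vt_mul, if_neg h]
    simp

lemma p_mul_q (v : E.V) (i : Fin (m + 1)) : p F v i * q F v i = F.vt (hv m v i) := by
  induction i using Fin.induction with
  | zero => simp [p_zero, q_zero, vt_mul]
  | succ i ih =>
    rw [q_succ, p_succ, mul_assoc, ← mul_assoc (p F v _), ih, ← mul_assoc, ← r_he, F.edgeRight,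
      ck_hair]

/-! ### Matrix units and the diagonal embedding -/

/-- The sum of the hair paths of length `i`. -/
def a (i : Fin (m + 1)) : A := ∑ v, p F v i

/-- The sum of the ghost hair paths of length `i`. -/
def b (i : Fin (m + 1)) : A := ∑ v, q F v i

/-- The idempotent given by the sum of the vertices of `E`. -/
def eps : A := ∑ v, F.vt (hv m v 0)

lemma a_zero : a F 0 = eps F := rfl

lemma b_zero : b F 0 = eps F := rfl

lemma p_mul_vt' (v w : E.V) (i : Fin (m + 1)) :
    p F v i * F.vt (hv m w 0) = if v = w then p F v i else 0 := by
  rw [← p_mul_vt, mul_assoc, vt_mul]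
  split_ifs with h1 h2 h2 <;> simp_all

lemma vt_mul_q' (v w : E.V) (i : Fin (m + 1)) :
    F.vt (hv m w 0) * q F v i = if w = v then q F v i else 0 := by
  rw [← vt_mul_q, ← mul_assoc, vt_mul]
  split_ifs with h1 h2 h2 <;> simp_all

lemma a_mul_vt (v : E.V) (i : Fin (m + 1)) : a F i * F.vt (hv m v 0) = p F v i := by
  simp [a, sum_mul, p_mul_vt']

lemma vt_mul_b (v : E.V) (i : Fin (m + 1)) : F.vt (hv m v 0) * b F i = q F v i := by
  simp [b, mul_sum, vt_mul_q']

lemma b_mul_a (i j : Fin (m + 1)) : b F i * a F j = if i = j then eps F else 0 := by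
  simp only [a, b, sum_mul_sum, q_mul_p]
  split_ifs with h <;> simp [h, eps]

lemma a_mul_eps (i : Fin (m + 1)) : a F i * eps F = a F i := by
  simp only [eps, mul_sum, a_mul_vt]; rfl

lemma eps_mul_b (i : Fin (m + 1)) : eps F * b F i = b F i := by
  simp only [eps, sum_mul, vt_mul_b]; rfl

lemma sum_a_mul_b : ∑ i, a F i * b F i = 1 := by
  rw [F.unit, sum_V, sum_comm]
  refine sum_congr rfl fun i _ => ?_
  conv_lhs => rw [← a_mul_eps, mul_assoc, eps, sum_mul, mul_sum]
  refine sum_congr rfl fun v _ => ?_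
  rw [vt_mul_b, ← vt_mul_q, ← mul_assoc, a_mul_vt, p_mul_q]

lemma mul_eps_of {x : A} {v : E.V} (h : x * F.vt (hv m v 0) = x) : x * eps F = x := by
  rw [← h, mul_assoc, eps, mul_sum]
  simp [vt_mul]

lemma eps_mul_of {x : A} {v : E.V} (h : F.vt (hv m v 0) * x = x) : eps F * x = x := by
  rw [← h, ← mul_assoc, eps, sum_mul]
  simp [vt_mul]

/-- The diagonal embedding of the corner `ε A ε`. -/
def T : A →+ A where
  toFun x := ∑ i, a F i * x * b F i
  map_zero' := by simp
  map_add' x y := by simp [mul_add, add_mul, sum_add_distrib]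

lemma T_apply (x : A) : T F x = ∑ i, a F i * x * b F i := rfl

lemma a_mul_b_mul_T {x : A} (hx : eps F * x = x) (i j : Fin (m + 1)) :
    a F i * b F j * T F x = a F i * x * b F j := by
  rw [T_apply, mul_sum, sum_eq_single j]
  · rw [mul_assoc (a F j), mul_assoc (a F i), ← mul_assoc (b F j), b_mul_a, if_pos rfl,
      ← mul_assoc (eps F), hx, mul_assoc]
  · intro k _ hk
    rw [mul_assoc (a F k), mul_assoc (a F i), ← mul_assoc (b F j), b_mul_a, if_neg hk.symm]
    simp
  · simp

lemma T_mul_a_mul_b {x : A} (hx : x * eps F = x) (i j : Fin (m + 1)) :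
    T F x * (a F i * b F j) = a F i * x * b F j := by
  rw [T_apply, sum_mul, sum_eq_single i]
  · rw [mul_assoc, ← mul_assoc (b F i), b_mul_a, if_pos rfl, ← mul_assoc, mul_assoc (a F i), hx]
  · intro k _ hk
    rw [mul_assoc, ← mul_assoc (b F k), b_mul_a, if_neg hk]
    simp
  · simp

lemma T_mul {x : A} (hx : x * eps F = x) (y : A) : T F x * T F y = T F (x * y) := by
  rw [T_apply F y, mul_sum, T_apply F (x * y)]
  refine sum_congr rfl fun i _ => ?_
  -- Insert `ε` to the right of `a i` and read `a i * ε = a i * b 0`.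
  have h := T_mul_a_mul_b F hx i 0
  rw [b_zero, a_mul_eps, mul_assoc, hx] at h
  rw [← mul_assoc, ← mul_assoc, h, mul_assoc (a F i)]

/-- The Leavitt `E`-family obtained by embedding the generators coming from `E` diagonally. -/
def thetaFam : Family E A where
  vt v := T F (F.vt (hv m v 0))
  ed e := T F (F.ed (be m e))
  gh e := T F (F.gh (be m e))
  vertMul v w := by
    rw [T_mul F (mul_eps_of F (v := v) (by simp [vt_mul])), vt_mul]
    split_ifs <;> simp_all
  edgeLeft e := by
    rw [T_mul F (mul_eps_of F (v := E.s e) (by simp [vt_mul])), ← s_be, F.edgeLeft]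
  edgeRight e := by
    rw [T_mul F (mul_eps_of F (v := E.r e) (F.edgeRight _)), ← r_be, F.edgeRight]
  ghostLeft e := by
    rw [T_mul F (mul_eps_of F (v := E.r e) (by simp [vt_mul])), ← r_be, F.ghostLeft]
  ghostRight e := by
    rw [T_mul F (mul_eps_of F (v := E.s e) (F.ghostRight _)), ← s_be, F.ghostRight]
  ghostEdge e f := by
    rw [T_mul F (mul_eps_of F (v := E.s e) (F.ghostRight _)), F.ghostEdge]
    simp only [be_inj, r_be]
    split_ifs <;> simp
  ck v h := by
    rw [ck_base F v h, map_sum]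
    refine sum_congr rfl fun e _ => ?_
    rw [T_mul F (mul_eps_of F (v := E.r e) (F.edgeRight _))]
    split_ifs <;> simp
  unit := by
    rw [← map_sum, ← sum_a_mul_b F, T_apply]
    refine sum_congr rfl fun i _ => ?_
    rw [← eps, a_mul_eps]

end Paths

/-! ### The two homomorphisms -/

variable (K) in
/-- The unital homomorphism `L_K(E) → A` induced by the diagonal embedding. -/
def theta (F : Family (HG E m) A) : LeavittPathAlgebra K E →ₐ[K] A := (thetaFam F).lift K

lemma theta_commute (F : Family (HG E m) A) (i j : Fin (m + 1)) (x : LeavittPathAlgebra K E) :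
    Commute (a F i * b F j) (theta K F x) := by
  have key : ∀ y : A, eps F * y = y → y * eps F = y → Commute (a F i * b F j) (T F y) :=
    fun y h1 h2 => (a_mul_b_mul_T F h1 i j).trans (T_mul_a_mul_b F h2 i j).symm
  refine commute_of_gen _ _ (fun v => ?_) (fun e => ?_) (fun e => ?_) x
  · rw [theta, Family.lift_vert]
    exact key _ (eps_mul_of F (v := v) (by simp [vt_mul])) (mul_eps_of F (v := v) (by simp [vt_mul]))
  · rw [theta, Family.lift_edge]
    exact key _ (eps_mul_of F (F.edgeLeft (be m e))) (mul_eps_of F (F.edgeRight (be m e)))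
  · rw [theta, Family.lift_ghost]
    exact key _ (eps_mul_of F (F.ghostLeft (be m e))) (mul_eps_of F (F.ghostRight (be m e)))

lemma units_mul (F : Family (HG E m) A) (i j k l : Fin (m + 1)) :
    a F i * b F j * (a F k * b F l) = if j = k then a F i * b F l else 0 := by
  rw [mul_assoc, ← mul_assoc (b F j), b_mul_a]
  split_ifs
  · rw [eps_mul_b]
  · simp

variable (K) in
/-- The homomorphism `M_{m+1}(L_K(E)) → A` given by `theta` on entries and the matrix units
`a i * b j`. -/
def psi (F : Family (HG E m) A) :
    Matrix (Fin (m + 1)) (Fin (m + 1)) (LeavittPathAlgebra K E) →ₐ[K] A :=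
  AlgHom.ofLinearMap
    { toFun := fun M => ∑ i, ∑ j, theta K F (M i j) * (a F i * b F j)
      map_add' := fun M N => by simp [add_mul, sum_add_distrib]
      map_smul' := fun c M => by simp [smul_sum] }
    (by
      change ∑ i, ∑ j, theta K F ((1 : Matrix _ _ _) i j) * (a F i * b F j) = 1
      rw [← sum_a_mul_b F]
      refine sum_congr rfl fun i _ => ?_
      rw [sum_eq_single i]
      · simp
      · intro j _ hj
        simp [Matrix.one_apply_ne hj.symm]
      · simp)
    (by
      intro M N
      change ∑ i, ∑ j, theta K F ((M * N) i j) * (a F i * b F j) =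
        (∑ i, ∑ j, theta K F (M i j) * (a F i * b F j)) *
        (∑ i, ∑ j, theta K F (N i j) * (a F i * b F j))
      have key : ∀ i j k l, theta K F (M i j) * (a F i * b F j) *
          (theta K F (N k l) * (a F k * b F l)) =
          if j = k then theta K F (M i j * N k l) * (a F i * b F l) else 0 := by
        intro i j k l
        rw [mul_assoc, ← mul_assoc (a F i * b F j), (theta_commute F i j _).eq, mul_assoc,
          units_mul, ← mul_assoc, map_mul]
        split_ifs <;> simp
      rw [sum_mul]
      refine sum_congr rfl fun i _ => ?_
      simp only [Matrix.mul_apply, map_sum, sum_mul]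
      rw [sum_comm]
      refine sum_congr rfl fun j _ => ?_
      simp only [mul_sum, key]
      rw [sum_comm]
      simp)

lemma psi_single (F : Family (HG E m) A) (i j : Fin (m + 1)) (x : LeavittPathAlgebra K E) :
    psi K F (Matrix.single i j x) = theta K F x * (a F i * b F j) := by
  change ∑ k, ∑ l, theta K F (Matrix.single i j x k l) * (a F k * b F l) = _
  rw [sum_eq_single i, sum_eq_single j]
  · simp
  · intro l _ hl
    simp [Matrix.single_apply_of_col_ne _ _ hl.symm]
  · simp
  · intro k _ hk
    refine sum_eq_zero fun l _ => ?_
    simp [Matrix.single_apply_of_row_ne hk.symm]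
  · simp

/-- Images of the vertices in the matrix algebra. -/
def phiV (K : Type) [Field K] (E : FinGraph) (m : ℕ) :
    (HG E m).V → Matrix (Fin (m + 1)) (Fin (m + 1)) (LeavittPathAlgebra K E) :=
  Sum.elim (fun v => Matrix.single 0 0 ((taut K E).vt v))
    (fun x => Matrix.single (Fin.succ x.2) (Fin.succ x.2) ((taut K E).vt x.1))

/-- Images of the edges in the matrix algebra. -/
def phiE (K : Type) [Field K] (E : FinGraph) (m : ℕ) :
    (HG E m).E → Matrix (Fin (m + 1)) (Fin (m + 1)) (LeavittPathAlgebra K E) :=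
  Sum.elim (fun e => Matrix.single 0 0 ((taut K E).ed e))
    (fun x => Matrix.single (Fin.succ x.2) (Fin.castSucc x.2) ((taut K E).vt x.1))

/-- Images of the ghost edges in the matrix algebra. -/
def phiG (K : Type) [Field K] (E : FinGraph) (m : ℕ) :
    (HG E m).E → Matrix (Fin (m + 1)) (Fin (m + 1)) (LeavittPathAlgebra K E) :=
  Sum.elim (fun e => Matrix.single 0 0 ((taut K E).gh e))
    (fun x => Matrix.single (Fin.castSucc x.2) (Fin.succ x.2) ((taut K E).vt x.1))

lemma phiV_hv (v : E.V) (i : Fin (m + 1)) :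
    phiV K E m (hv m v i) = Matrix.single i i ((taut K E).vt v) := by
  induction i using Fin.cases <;> rfl

lemma phiE_be (e : E.E) : phiE K E m (be m e) = Matrix.single 0 0 ((taut K E).ed e) := rfl

lemma phiE_he (v : E.V) (i : Fin m) :
    phiE K E m (he v i) = Matrix.single i.succ i.castSucc ((taut K E).vt v) := rfl

lemma phiG_be (e : E.E) : phiG K E m (be m e) = Matrix.single 0 0 ((taut K E).gh e) := rfl

lemma phiG_he (v : E.V) (i : Fin m) :
    phiG K E m (he v i) = Matrix.single i.castSucc i.succ ((taut K E).vt v) := rfl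

lemma single_mul {R : Type} [Ring R] (i j k l : Fin (m + 1)) (x y : R) :
    Matrix.single i j x * Matrix.single k l y = if j = k then Matrix.single i l (x * y) else 0 := by
  split_ifs with h
  · rw [h, Matrix.single_mul_single_same]
  · rw [Matrix.single_mul_single_of_ne _ _ _ _ h]

lemma single_sum {R ι : Type} [Ring R] (s : Finset ι) (i j : Fin (m + 1)) (f : ι → R) :
    Matrix.single i j (∑ x ∈ s, f x) = ∑ x ∈ s, Matrix.single i j (f x) :=
  map_sum (Matrix.singleAddMonoidHom i j) f s

variable (K E m) in
/-- The Leavitt `M_{m+1}E`-family in the matrix algebra. -/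
def phiFam : Family (HG E m) (Matrix (Fin (m + 1)) (Fin (m + 1)) (LeavittPathAlgebra K E)) where
  vt := phiV K E m
  ed := phiE K E m
  gh := phiG K E m
  vertMul x y := by
    obtain ⟨v, i, rfl⟩ := exists_hv x
    obtain ⟨w, j, rfl⟩ := exists_hv y
    simp only [phiV_hv, single_mul, hv_inj, (taut K E).vertMul]
    by_cases h : v = w <;> by_cases h' : i = j <;> simp [h, h']
  edgeLeft x := by
    rcases exists_edge x with ⟨e, rfl⟩ | ⟨v, i, rfl⟩
    · simp [s_be, phiV_hv, phiE_be, (taut K E).edgeLeft]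
    · simp [s_he, phiV_hv, phiE_he, (taut K E).vertMul]
  edgeRight x := by
    rcases exists_edge x with ⟨e, rfl⟩ | ⟨v, i, rfl⟩
    · simp [r_be, phiV_hv, phiE_be, (taut K E).edgeRight]
    · simp [r_he, phiV_hv, phiE_he, (taut K E).vertMul]
  ghostLeft x := by
    rcases exists_edge x with ⟨e, rfl⟩ | ⟨v, i, rfl⟩
    · simp [r_be, phiV_hv, phiG_be, (taut K E).ghostLeft]
    · simp [r_he, phiV_hv, phiG_he, (taut K E).vertMul]
  ghostRight x := by
    rcases exists_edge x with ⟨e, rfl⟩ | ⟨v, i, rfl⟩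
    · simp [s_be, phiV_hv, phiG_be, (taut K E).ghostRight]
    · simp [s_he, phiV_hv, phiG_he, (taut K E).vertMul]
  ghostEdge x y := by
    rcases exists_edge x with ⟨e, rfl⟩ | ⟨v, i, rfl⟩ <;>
      rcases exists_edge y with ⟨f, rfl⟩ | ⟨w, j, rfl⟩
    · simp only [r_be, phiV_hv, phiG_be, phiE_be, single_mul, (taut K E).ghostEdge, be_inj]
      by_cases h : e = f <;> simp [h]
    · have h : be m e ≠ he w j := Sum.inl_ne_inr
      simp [phiG_be, phiE_he, h, (Fin.succ_ne_zero _).symm]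
    · have h : he v i ≠ be m f := Sum.inr_ne_inl
      simp [phiG_he, phiE_be, h, Fin.succ_ne_zero]
    · simp only [r_he, phiV_hv, phiG_he, phiE_he, single_mul, (taut K E).vertMul, he_inj,
        Fin.succ_inj]
      by_cases h : v = w <;> by_cases h' : i = j <;> simp [h, h']
  ck x hx := by
    obtain ⟨v, i, rfl⟩ := exists_hv x
    induction i using Fin.cases with
    | zero =>
      have hv' : E.IsRegular v := by
        obtain ⟨y, hy⟩ := hx
        rcases exists_edge y with ⟨e, rfl⟩ | ⟨w, i, rfl⟩
        · exact ⟨e, (hv_inj.1 ((s_be e).symm.trans hy)).1⟩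
        · exact absurd (hv_inj.1 ((s_he w i).symm.trans hy)).2 (Fin.succ_ne_zero i)
      rw [sum_E, phiV_hv, (taut K E).ck v hv', single_sum]
      simp only [s_be, s_he, hv_inj, phiE_be, phiG_be, single_mul, Fin.succ_ne_zero, and_false,
        if_false, sum_const_zero, add_zero, and_true, if_true]
      refine sum_congr rfl fun e _ => ?_
      split_ifs <;> simp
    | succ i =>
      rw [sum_E, phiV_hv]
      simp [s_be, s_he, hv_inj, phiE_he, phiG_he, (Fin.succ_ne_zero _).symm, ite_and,
        (taut K E).vertMul]
  unit := by
    rw [sum_V, sum_comm]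
    simp only [phiV_hv, ← single_sum, ← (taut K E).unit]
    exact Matrix.sum_single_one.symm

variable (K E m) in
/-- The homomorphism `L_K(M_{m+1}E) → M_{m+1}(L_K(E))`. -/
def phi : LeavittPathAlgebra K (HG E m) →ₐ[K]
    Matrix (Fin (m + 1)) (Fin (m + 1)) (LeavittPathAlgebra K E) := (phiFam K E m).lift K

/-! ### The homomorphisms are mutually inverse -/

lemma phi_p (v : E.V) (i : Fin (m + 1)) :
    phi K E m (p (taut K (HG E m)) v i) = Matrix.single i 0 ((taut K E).vt v) := by
  induction i using Fin.induction with
  | zero => exact (Family.lift_vert _ _).trans (phiV_hv v 0)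
  | succ i ih =>
    have h : phi K E m ((taut K (HG E m)).ed (he v i)) = phiE K E m (he v i) :=
      Family.lift_edge _ _
    rw [p_succ, map_mul, ih, h, phiE_he, single_mul, if_pos rfl, (taut K E).vertMul, if_pos rfl]

lemma phi_q (v : E.V) (i : Fin (m + 1)) :
    phi K E m (q (taut K (HG E m)) v i) = Matrix.single 0 i ((taut K E).vt v) := by
  induction i using Fin.induction with
  | zero => exact (Family.lift_vert _ _).trans (phiV_hv v 0)
  | succ i ih =>
    have h : phi K E m ((taut K (HG E m)).gh (he v i)) = phiG K E m (he v i) :=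
      Family.lift_ghost _ _
    rw [q_succ, map_mul, ih, h, phiG_he, single_mul, if_pos rfl, (taut K E).vertMul, if_pos rfl]

lemma phi_a (i : Fin (m + 1)) : phi K E m (a (taut K (HG E m)) i) = Matrix.single i 0 1 := by
  rw [a, map_sum, (taut K E).unit, single_sum]
  exact sum_congr rfl fun v _ => phi_p v i

lemma phi_b (i : Fin (m + 1)) : phi K E m (b (taut K (HG E m)) i) = Matrix.single 0 i 1 := by
  rw [b, map_sum, (taut K E).unit, single_sum]
  exact sum_congr rfl fun v _ => phi_q v i

lemma phi_T {y : LeavittPathAlgebra K (HG E m)} {x : LeavittPathAlgebra K E}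
    (h : phi K E m y = Matrix.single 0 0 x) :
    phi K E m (T (taut K (HG E m)) y) = Matrix.scalar (Fin (m + 1)) x := by
  rw [T_apply, map_sum]
  simp only [map_mul, phi_a, phi_b, h, single_mul, if_true, one_mul, mul_one]
  ext i j
  simp [Matrix.sum_apply, Matrix.single_apply, Matrix.diagonal_apply, ite_and]

lemma phi_theta (x : LeavittPathAlgebra K E) :
    phi K E m (theta K (taut K (HG E m)) x) = Matrix.scalar (Fin (m + 1)) x := by
  have h : (phi K E m).comp (theta K (taut K (HG E m))) =
      Matrix.scalarAlgHom (Fin (m + 1)) K := by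
    refine lpa_hom_ext (fun v => ?_) (fun e => ?_) (fun e => ?_)
    · rw [AlgHom.comp_apply, theta, Family.lift_vert]
      exact phi_T ((Family.lift_vert _ _).trans (phiV_hv v 0))
    · rw [AlgHom.comp_apply, theta, Family.lift_edge]
      exact phi_T (Family.lift_edge _ _)
    · rw [AlgHom.comp_apply, theta, Family.lift_ghost]
      exact phi_T (Family.lift_ghost _ _)
  exact DFunLike.congr_fun h x

lemma phi_psi (M : Matrix (Fin (m + 1)) (Fin (m + 1)) (LeavittPathAlgebra K E)) :
    phi K E m (psi K (taut K (HG E m)) M) = M := by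
  conv_rhs => rw [Matrix.matrix_eq_sum_single M]
  conv_lhs => rw [Matrix.matrix_eq_sum_single M]
  simp only [map_sum]
  refine sum_congr rfl fun i _ => sum_congr rfl fun j _ => ?_
  rw [psi_single, map_mul, map_mul, phi_theta, phi_a, phi_b, single_mul, if_pos rfl]
  ext k l
  simp [Matrix.single_apply]

lemma psi_vt (v : E.V) (i j : Fin (m + 1)) :
    psi K (taut K (HG E m)) (Matrix.single i j ((taut K E).vt v)) =
      p (taut K (HG E m)) v i * q (taut K (HG E m)) v j := by
  have h : theta K (taut K (HG E m)) ((taut K E).vt v) =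
      T (taut K (HG E m)) ((taut K (HG E m)).vt (hv m v 0)) := Family.lift_vert _ _
  rw [psi_single, h, T_mul_a_mul_b _ (mul_eps_of _ (v := v) (by simp [vt_mul])), a_mul_vt,
    ← p_mul_vt, mul_assoc, vt_mul_b, p_mul_vt]

/-- On the corner `E_{00}`, `psi` inverts `phi`. -/
lemma psi_corner {x : LeavittPathAlgebra K E} {y : LeavittPathAlgebra K (HG E m)}
    (h : theta K (taut K (HG E m)) x = T (taut K (HG E m)) y)
    (h1 : eps (taut K (HG E m)) * y = y) (h2 : y * eps (taut K (HG E m)) = y) :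
    psi K (taut K (HG E m)) (Matrix.single 0 0 x) = y := by
  rw [psi_single, h, T_mul_a_mul_b _ h2, a_zero, b_zero, h1, h2]

lemma psi_phi (y : LeavittPathAlgebra K (HG E m)) :
    psi K (taut K (HG E m)) (phi K E m y) = y := by
  have h : (psi K (taut K (HG E m))).comp (phi K E m) = AlgHom.id K _ := by
    refine lpa_hom_ext (fun x => ?_) (fun x => ?_) (fun x => ?_)
    · obtain ⟨v, i, rfl⟩ := exists_hv x
      rw [AlgHom.comp_apply, phi, Family.lift_vert]
      change psi K _ (phiV K E m _) = _
      rw [phiV_hv, psi_vt, p_mul_q]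
      rfl
    · rw [AlgHom.comp_apply, phi, Family.lift_edge]
      change psi K _ (phiE K E m _) = (taut K (HG E m)).ed x
      rcases exists_edge x with ⟨e, rfl⟩ | ⟨v, i, rfl⟩
      · exact psi_corner (Family.lift_edge _ _)
          (eps_mul_of _ ((taut K (HG E m)).edgeLeft (be m e)))
          (mul_eps_of _ ((taut K (HG E m)).edgeRight (be m e)))
      · rw [phiE_he, psi_vt, p_succ, mul_assoc, p_mul_q, ← r_he, (taut K (HG E m)).edgeRight]
    · rw [AlgHom.comp_apply, phi, Family.lift_ghost]
      change psi K _ (phiG K E m _) = (taut K (HG E m)).gh x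
      rcases exists_edge x with ⟨e, rfl⟩ | ⟨v, i, rfl⟩
      · exact psi_corner (Family.lift_ghost _ _)
          (eps_mul_of _ ((taut K (HG E m)).ghostLeft (be m e)))
          (mul_eps_of _ ((taut K (HG E m)).ghostRight (be m e)))
      · rw [phiG_he, psi_vt, q_succ, ← mul_assoc, p_mul_q, ← r_he, (taut K (HG E m)).ghostLeft]
  exact DFunLike.congr_fun h y

end HairMatrix

/-- `M_n(L_K(E)) ≅ L_K(M_nE)`, where `M_nE = E⁺(n, …, n)`. -/
theorem matrix_iso_hairExtension (K : Type) [Field K] (E : FinGraph) (n : ℕ) (hn : 0 < n) :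
    Nonempty (Matrix (Fin n) (Fin n) (LeavittPathAlgebra K E) ≃ₐ[K]
      LeavittPathAlgebra K (E.hairExtension fun _ => n)) := by
  obtain ⟨m, rfl⟩ : ∃ m, n = m + 1 := ⟨n - 1, by omega⟩
  exact ⟨AlgEquiv.ofAlgHom (HairMatrix.psi K (HairMatrix.taut K (HairMatrix.HG E m)))
    (HairMatrix.phi K E m) (AlgHom.ext HairMatrix.psi_phi) (AlgHom.ext HairMatrix.phi_psi)⟩
end
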